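/- The only member of Narayana's cows sequence greater than 99 that is a palindromic concatenation of two distinct repdigits in base 10 is 595. That is, if N_n = f1...f1 f2...f2 f1...f1 (with u1 copies of f1, then u2 copies of f2, then u1 copies of f1 in decimal), where f1, f2 are distinct digits, f1 ≥ 1, and u1, u2 ≥ 1, then N_n = 595. -/

import Mathlib

def narayana : ℕ → ℕ
  | 0 => 0
  | 1 => 1
  | 2 => 1
  | n + 3 => narayana (n + 2) + narayana n

/-!
Sieving the decimal equation modulo `10 ^ 4` and a few primes leaves, apart from finitely many small
cases, only the digits `f1 = 9`, `f2 = 8` with `10 ^ (u1 + 1) ≡ 1` modulo `6301`, so that `u1` is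
huge. This case cannot be removed by congruences: the recurrence run backwards has `N (-4) = -1`,
which solves the equation with `u1 = -1`. There `2 ^ u1` divides `N n + 1`, and a `2`-adic
computation in powers of the companion matrix bounds `2 ^ u1` by `4 * (n + 4)`, so `u1` is tiny
compared to `n`. With `α` the real root of `X ^ 3 - X ^ 2 - 1`, the ratio `ν` of
`(3 α - 2) (1 - 1 / (9 * 10 ^ u1)) * 10 ^ (2 u1 + u2)` to `α ^ n` is then extremely close to `1`.

This contradicts a lower bound obtained by the Gel'fond–Schneider method for `η = α ^ a / 10 ^ b`,
with `b / a` a good approximation of `log α / log 10`, and `κ = η ^ q * ν`. Thue's lemma gives an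
integer polynomial `P` for which `P(z, η ^ z)` is small on a long interval. If `ν` were too close to
`1`, then `P(e + q s, η ^ e * κ ^ s)` would be small too; by Liouville's inequality in `ℤ[α]` it
would vanish at all these points, and a zero estimate would force `P = 0`.
-/

namespace NarayanaCows

section ZeroEstimate

open Polynomial

theorem coeff_prod_sum_of_natDegree_le {ι R : Type*} [CommSemiring R] (s : Finset ι)
    (f : ι → R[X]) (d : ι → ℕ) (h : ∀ i ∈ s, (f i).natDegree ≤ d i) :
    (∏ i ∈ s, f i).coeff (∑ i ∈ s, d i) = ∏ i ∈ s, (f i).coeff (d i) := by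
  classical
  induction s using Finset.induction_on with
  | empty => simp
  | insert a s ha ih =>
    obtain ⟨hfa, hfs⟩ := (Finset.forall_mem_insert _ _ _).mp h
    rw [Finset.prod_insert ha, Finset.sum_insert ha, Finset.prod_insert ha,
      coeff_mul_add_eq_of_natDegree_le hfa, ih hfs]
    exact (natDegree_prod_le _ _).trans (Finset.sum_le_sum hfs)

variable {n R : Type*} [Fintype n] [DecidableEq n] [CommRing R]

theorem coeff_det_sum_of_natDegree_le (A : Matrix n n R[X]) (d : n → ℕ)
    (h : ∀ i j, (A i j).natDegree ≤ d j) :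
    A.det.coeff (∑ j, d j) = (Matrix.of fun i j ↦ (A i j).coeff (d j)).det := by
  simp only [Matrix.det_apply, finsetSum_coeff, coeff_smul, Matrix.of_apply]
  exact Finset.sum_congr rfl fun σ _ ↦
    congrArg _ (coeff_prod_sum_of_natDegree_le _ _ d fun j _ ↦ h (σ j) j)

theorem natDegree_det_le_sum (A : Matrix n n R[X]) (d : n → ℕ)
    (h : ∀ i j, (A i j).natDegree ≤ d j) : A.det.natDegree ≤ ∑ j, d j := by
  rw [Matrix.det_apply]
  exact natDegree_sum_le_of_forall_le _ _ fun σ _ ↦ (natDegree_smul_le _ _).trans <|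
    (natDegree_prod_le _ _).trans <| Finset.sum_le_sum fun j _ ↦ h (σ j) j

/-- Matrix of the translates by `0, …, c - 1` of the exponential polynomial terms `Pⱼ(z) * xⱼ ^ z`,
after division of column `j` by `xⱼ ^ z`. Its determinant plays the role of a Casoratian in the
zero estimate for exponential polynomials. -/
noncomputable def translateMatrix {c : ℕ} (x : Fin c → R) (P : Fin c → R[X]) :
    Matrix (Fin c) (Fin c) R[X] :=
  Matrix.of fun i j ↦ C (x j ^ (i : ℕ)) * (P j).comp (X + C (i : R))

variable {c : ℕ} (x : Fin c → R) (P : Fin c → R[X])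

theorem eval_translateMatrix_apply (z : R) (i j : Fin c) :
    (translateMatrix x P i j).eval z = (P j).eval (z + (i : ℕ)) * x j ^ (i : ℕ) := by
  simp [translateMatrix, mul_comm]

variable [IsDomain R]

theorem natDegree_translateMatrix_le (i j : Fin c) :
    (translateMatrix x P i j).natDegree ≤ (P j).natDegree := by
  rw [translateMatrix, Matrix.of_apply]
  refine (natDegree_C_mul_le _ _).trans ?_
  rw [natDegree_comp, natDegree_X_add_C, mul_one]

theorem coeff_translateMatrix_natDegree (i j : Fin c) :
    (translateMatrix x P i j).coeff (P j).natDegree = (P j).leadingCoeff * x j ^ (i : ℕ) := by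
  have hdeg : ((P j).comp (X + C (i : R))).natDegree = (P j).natDegree := by
    rw [natDegree_comp, natDegree_X_add_C, mul_one]
  have hlead : ((P j).comp (X + C (i : R))).coeff (P j).natDegree = (P j).leadingCoeff := by
    rw [← hdeg, coeff_natDegree, leadingCoeff_comp (by rw [natDegree_X_add_C]; exact one_ne_zero),
      leadingCoeff_X_add_C, one_pow, mul_one]
  rw [translateMatrix, Matrix.of_apply, coeff_C_mul, hlead, mul_comm]

theorem det_translateMatrix_ne_zero (hx : Function.Injective x) (hP : ∀ j, P j ≠ 0) :
    (translateMatrix x P).det ≠ 0 := by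
  intro h0
  have hcoeff : (Matrix.of fun i j ↦ (translateMatrix x P i j).coeff (P j).natDegree) =
      Matrix.of fun i j ↦ (P j).leadingCoeff * (Matrix.vandermonde x).transpose i j := by
    ext i j
    simp [coeff_translateMatrix_natDegree]
  have h := coeff_det_sum_of_natDegree_le _ _ (natDegree_translateMatrix_le x P)
  rw [h0, coeff_zero, hcoeff, Matrix.det_mul_row, Matrix.det_transpose] at h
  exact mul_ne_zero (Finset.prod_ne_zero_iff.mpr fun j _ ↦ leadingCoeff_ne_zero.mpr (hP j))
    (Matrix.det_vandermonde_ne_zero_iff.mpr hx) h.symm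

theorem card_le_sum_natDegree_of_expPoly_vanish (hc : 0 < c) (hx : Function.Injective x)
    (hP : ∀ j, P j ≠ 0) (Z : Finset R)
    (hZ : ∀ z ∈ Z, ∃ w : Fin c → R, (∀ j, w j ≠ 0) ∧
      ∀ i < c, ∑ j, (P j).eval (z + i) * x j ^ i * w j = 0) :
    Z.card ≤ ∑ j, (P j).natDegree := by
  have hdet := det_translateMatrix_ne_zero x P hx hP
  refine le_trans (card_le_degree_of_subset_roots fun z hz ↦ ?_)
    (natDegree_det_le_sum _ _ (natDegree_translateMatrix_le x P))
  obtain ⟨w, hw, hsum⟩ := hZ z hz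
  rw [mem_roots hdet, IsRoot, eval_det, ← Matrix.exists_mulVec_eq_zero_iff]
  refine ⟨w, fun h ↦ hw ⟨0, hc⟩ (congrFun h _), funext fun i ↦ ?_⟩
  rw [Pi.zero_apply, ← hsum i i.2, Matrix.mulVec, dotProduct]
  refine Finset.sum_congr rfl fun j _ ↦ ?_
  rw [← eval_translateMatrix_apply, matPolyEquiv_eval]

/-- Zero estimate for the exponential polynomial `∑ₗ Pₗ(z) * xₗ ^ z`; the weight `w l` stands for
the value of `xₗ ^ z` at the start of a run. -/
theorem eq_zero_of_expPoly_vanish {K L : ℕ} {x : Fin L → R} (hx : Function.Injective x)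
    (P : Fin L → R[X]) (hdeg : ∀ l, (P l).natDegree < K) (Z : Finset R) (hcard : K * L ≤ Z.card)
    (hZ : ∀ z ∈ Z, ∃ w : Fin L → R, (∀ l, w l ≠ 0) ∧
      ∀ i < L, ∑ l, (P l).eval (z + i) * x l ^ i * w l = 0) (l : Fin L) :
    P l = 0 := by
  classical
  by_contra hl
  set s := Finset.univ.filter fun l ↦ P l ≠ 0 with hs
  have hpos : 0 < s.card := Finset.card_pos.mpr ⟨l, by simpa [hs] using hl⟩
  have hsL : s.card ≤ L := by simpa using Finset.card_le_univ s
  let f : Fin s.card ↪o Fin L := s.orderEmbOfFin rfl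
  have hsum_f (g : Fin L → R) : ∑ l ∈ s, g l = ∑ j, g (f j) :=
    (congrArg (fun t ↦ ∑ l ∈ t, g l) (Finset.map_orderEmbOfFin_univ s rfl)).symm.trans
      (Finset.sum_map _ f.toEmbedding g)
  have hfP : ∀ j, P (f j) ≠ 0 := fun j ↦
    (Finset.mem_filter.mp (Finset.orderEmbOfFin_mem s rfl j)).2
  have hbound := card_le_sum_natDegree_of_expPoly_vanish (x ∘ f) (P ∘ f) hpos
    (hx.comp f.injective) hfP Z fun z hz ↦ by
    obtain ⟨w, hw, hsum⟩ := hZ z hz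
    refine ⟨w ∘ f, fun j ↦ hw _, fun i hi ↦ ?_⟩
    have hsub : ∑ l ∈ s, (P l).eval (z + i) * x l ^ i * w l = 0 := by
      rw [← hsum i (hi.trans_le hsL)]
      refine Finset.sum_subset (Finset.subset_univ s) fun l _ hl ↦ ?_
      have hPl : P l = 0 := by simpa [hs] using hl
      simp [hPl]
    rwa [hsum_f] at hsub
  have hdegsum : ∑ j, (P (f j)).natDegree ≤ s.card * (K - 1) := by
    simpa using Finset.sum_le_card_nsmul Finset.univ (fun j ↦ (P (f j)).natDegree) (K - 1)
      fun j _ ↦ Nat.le_sub_one_of_lt (hdeg _)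
  have hK : 0 < K := (Nat.zero_le _).trans_lt (hdeg l)
  have : s.card * (K - 1) < K * L := calc
    s.card * (K - 1) < s.card * K := Nat.mul_lt_mul_of_pos_left (by omega) hpos
    _ ≤ K * L := by rw [mul_comm]; exact Nat.mul_le_mul_left K hsL
  exact absurd (hcard.trans (hbound.trans hdegsum)) (not_le.mpr this)

end ZeroEstimate

section Pigeonhole

variable {ι μ : Type*} [Fintype ι]

theorem abs_sum_mul_le_mul_sum (p lam : ι → ℝ) {B : ℝ} (hp : ∀ i, |p i| ≤ B) :
    |∑ i, p i * lam i| ≤ B * ∑ i, |lam i| := by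
  refine (Finset.abs_sum_le_sum_abs _ _).trans ?_
  rw [Finset.mul_sum]
  refine Finset.sum_le_sum fun i _ ↦ ?_
  rw [abs_mul]
  exact mul_le_mul_of_nonneg_right (hp i) (abs_nonneg _)

theorem floor_div_mem_Icc {x δ : ℝ} {ℓ : ℕ} (hδ : 0 < δ) (hx : |x| ≤ ℓ * δ) :
    ⌊x / δ⌋ ∈ Finset.Icc (-(ℓ : ℤ)) ℓ := by
  obtain ⟨hlo, hhi⟩ := abs_le.mp hx
  rw [Finset.mem_Icc]
  constructor
  · rw [Int.le_floor, le_div_iff₀ hδ]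
    push_cast
    linarith
  · rw [← Int.lt_add_one_iff, Int.floor_lt, div_lt_iff₀ hδ]
    push_cast
    linarith

theorem abs_sub_le_of_floor_div_eq {x y δ : ℝ} (hδ : 0 < δ) (h : ⌊x / δ⌋ = ⌊y / δ⌋) :
    |x - y| ≤ δ := by
  have hlt := Int.abs_sub_lt_one_of_floor_eq_floor h
  rw [← sub_div, abs_div, abs_of_pos hδ, div_lt_one hδ] at hlt
  exact hlt.le

/-- Thue's lemma for real linear forms. -/
theorem exists_int_ne_zero_abs_sum_mul_le [Fintype μ] (lam : μ → ι → ℝ) {X ℓ : ℕ} {A δ : ℝ}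
    (hδ : 0 < δ) (hA : ∀ m, ∑ i, |lam m i| ≤ A) (hℓ : X * A ≤ ℓ * δ)
    (hcard : (2 * ℓ + 1) ^ Fintype.card μ < (X + 1) ^ Fintype.card ι) :
    ∃ p : ι → ℤ, p ≠ 0 ∧ (∀ i, |p i| ≤ X) ∧ ∀ m, |∑ i, (p i : ℝ) * lam m i| ≤ δ := by
  classical
  let form (x : ι → Fin (X + 1)) (m : μ) : ℝ := ∑ i, ((x i : ℕ) : ℝ) * lam m i
  have hmaps : ∀ x ∈ (Finset.univ : Finset (ι → Fin (X + 1))), (fun m ↦ ⌊form x m / δ⌋) ∈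
      Fintype.piFinset fun _ : μ ↦ Finset.Icc (-(ℓ : ℤ)) ℓ := by
    refine fun x _ ↦ Fintype.mem_piFinset.mpr fun m ↦ floor_div_mem_Icc hδ ?_
    refine (abs_sum_mul_le_mul_sum _ _ (B := X) fun i ↦ ?_).trans
      ((mul_le_mul_of_nonneg_left (hA m) X.cast_nonneg).trans hℓ)
    rw [Nat.abs_cast]
    exact_mod_cast (x i).is_le
  have hlt : (Fintype.piFinset fun _ : μ ↦ Finset.Icc (-(ℓ : ℤ)) ℓ).card <
      (Finset.univ : Finset (ι → Fin (X + 1))).card := by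
    have hIcc : (Finset.Icc (-(ℓ : ℤ)) ℓ).card = 2 * ℓ + 1 := by
      rw [Int.card_Icc]
      omega
    simpa only [Fintype.card_piFinset, Finset.prod_const, hIcc, Finset.card_univ, Fintype.card_fun,
      Fintype.card_fin] using hcard
  obtain ⟨x, -, y, -, hxy, hform⟩ := Finset.exists_ne_map_eq_of_card_lt_of_maps_to hlt hmaps
  refine ⟨fun i ↦ ((x i : ℕ) : ℤ) - ((y i : ℕ) : ℤ), fun h ↦ hxy (funext fun i ↦ Fin.ext ?_),
    fun i ↦ ?_, fun m ↦ ?_⟩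
  · have hi := congrFun h i
    simp only [Pi.zero_apply] at hi
    omega
  · have hxi := (x i).is_le
    have hyi := (y i).is_le
    exact abs_le.mpr ⟨by dsimp only; omega, by dsimp only; omega⟩
  · convert abs_sub_le_of_floor_div_eq hδ (congrFun hform m) using 2
    simp only [form, Int.cast_sub, Int.cast_natCast, sub_mul, Finset.sum_sub_distrib]

end Pigeonhole

section Taylor

theorem hasSum_pow_div_factorial (x : ℝ) :
    HasSum (fun i : ℕ ↦ x ^ i / i.factorial) (Real.exp x) := by
  rw [Real.exp_eq_exp_ℝ]
  exact NormedSpace.expSeries_div_hasSum_exp x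

theorem exp_sub_sum_le {x : ℝ} (hx : 0 ≤ x) (j : ℕ) :
    Real.exp x - ∑ i ∈ Finset.range j, x ^ i / i.factorial ≤
      x ^ j / j.factorial * Real.exp x := by
  have hsum := hasSum_pow_div_factorial x
  have htail := hsum.summable.sum_add_tsum_nat_add j
  rw [hsum.tsum_eq] at htail
  have hterm (i : ℕ) : x ^ (i + j) / (i + j).factorial ≤
      x ^ j / j.factorial * (x ^ i / i.factorial) := by
    rw [div_mul_div_comm, ← pow_add, add_comm j i, mul_comm (j.factorial : ℝ)]
    refine div_le_div_of_nonneg_left (pow_nonneg hx _) (by positivity) ?_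
    exact_mod_cast Nat.le_of_dvd (Nat.factorial_pos _)
      (Nat.factorial_mul_factorial_dvd_factorial_add i j)
  have hle := ((summable_nat_add_iff j).mpr hsum.summable).tsum_le_tsum hterm
    (hsum.summable.mul_left _)
  rw [tsum_mul_left, hsum.tsum_eq] at hle
  linarith

theorem abs_exp_sub_sum_le {x G : ℝ} (hx : |x| ≤ G) (j : ℕ) :
    |Real.exp x - ∑ i ∈ Finset.range j, x ^ i / i.factorial| ≤ Real.exp (3 * G) * (1 / 2) ^ j := by
  have hcomplex := Complex.norm_exp_sub_sum_le_exp_norm_sub_sum (x : ℂ) j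
  have hnorm : ‖Complex.exp x - ∑ m ∈ Finset.range j, (x : ℂ) ^ m / m.factorial‖ =
      |Real.exp x - ∑ i ∈ Finset.range j, x ^ i / i.factorial| := by
    rw [← Real.norm_eq_abs, ← Complex.norm_real]
    push_cast
    rfl
  rw [hnorm, Complex.norm_real, Real.norm_eq_abs] at hcomplex
  calc _ ≤ |x| ^ j / j.factorial * Real.exp |x| :=
        hcomplex.trans (exp_sub_sum_le (abs_nonneg x) j)
    _ = (1 / 2) ^ j * ((2 * |x|) ^ j / j.factorial * Real.exp |x|) := by
        rw [mul_pow, div_pow, one_pow]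
        field_simp
    _ ≤ (1 / 2) ^ j * (Real.exp (2 * |x|) * Real.exp |x|) := by
        gcongr
        exact Real.pow_div_factorial_le_exp _ (by positivity) j
    _ ≤ Real.exp (3 * G) * (1 / 2) ^ j := by
        rw [← Real.exp_add, mul_comm]
        gcongr
        linarith

/-- The coefficient of `(z / T) ^ m` in the Taylor expansion of `z ^ k * exp (h * z) ^ l` at `0`. -/
noncomputable def taylorCoeff (T h : ℝ) (m k l : ℕ) : ℝ :=
  if k ≤ m then T ^ k * ((l * h * T) ^ (m - k) / (m - k).factorial) else 0

variable {T h G : ℝ} {k l K L : ℕ}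

theorem abs_mul_mul_le {z : ℝ} (hz : 0 ≤ z) (hzT : z ≤ T) (hl : l < L) (hG : L * T * |h| ≤ G) :
    |l * h * z| ≤ G := by
  rw [abs_mul, abs_mul, Nat.abs_cast, abs_of_nonneg hz]
  calc (l : ℝ) * |h| * z = l * z * |h| := by ring
    _ ≤ L * T * |h| := by gcongr
    _ ≤ G := hG

theorem abs_taylorCoeff_le (hT : 1 ≤ T) (m : ℕ) (hk : k < K) (hl : l < L)
    (hG : L * T * |h| ≤ G) : |taylorCoeff T h m k l| ≤ T ^ K * Real.exp G := by
  have hT0 : 0 ≤ T := zero_le_one.trans hT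
  unfold taylorCoeff
  split_ifs
  · rw [abs_mul, abs_div, abs_pow, abs_pow, abs_of_nonneg hT0, Nat.abs_cast]
    refine mul_le_mul (pow_le_pow_right₀ hT hk.le) ?_ (by positivity) (by positivity)
    exact (Real.pow_div_factorial_le_exp _ (abs_nonneg _) _).trans
      (Real.exp_le_exp.mpr (abs_mul_mul_le hT0 le_rfl hl hG))
  · rw [abs_zero]
    positivity

theorem sum_taylorCoeff (hT : T ≠ 0) (z : ℝ) {J : ℕ} (hk : k ≤ J) :
    ∑ m ∈ Finset.range J, (z / T) ^ m * taylorCoeff T h m k l =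
      z ^ k * ∑ i ∈ Finset.range (J - k), (l * h * z) ^ i / i.factorial := by
  obtain ⟨j, rfl⟩ := Nat.exists_eq_add_of_le hk
  rw [Finset.sum_range_add, Finset.sum_eq_zero, zero_add, Finset.mul_sum, Nat.add_sub_cancel_left]
  · refine Finset.sum_congr rfl fun i _ ↦ ?_
    rw [taylorCoeff, if_pos (Nat.le_add_right k i), Nat.add_sub_cancel_left, pow_add, div_pow,
      div_pow, mul_pow _ T, mul_pow _ z]
    field_simp
  · intro m hm
    rw [taylorCoeff, if_neg (Finset.mem_range.mp hm).not_ge, mul_zero]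

theorem abs_pow_mul_exp_sub_sum_taylorCoeff_le (hT : 1 ≤ T) (hk : k < K) (hl : l < L)
    (hG : L * T * |h| ≤ G) {z : ℝ} (hz : 0 ≤ z) (hzT : z ≤ T) {J : ℕ} (hKJ : K ≤ J) :
    |z ^ k * Real.exp (h * z) ^ l -
        ∑ m ∈ Finset.range J, (z / T) ^ m * taylorCoeff T h m k l| ≤
      T ^ K * Real.exp (3 * G) * (1 / 2) ^ (J - K) := by
  have hexp : Real.exp (h * z) ^ l = Real.exp (l * h * z) := by
    rw [← Real.exp_nat_mul, mul_assoc]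
  rw [sum_taylorCoeff (by positivity) z (hk.le.trans hKJ), hexp, ← mul_sub, abs_mul, abs_pow,
    abs_of_nonneg hz, mul_assoc (T ^ K)]
  have hzk : z ^ k ≤ T ^ K := (pow_le_pow_left₀ hz hzT k).trans (pow_le_pow_right₀ hT hk.le)
  refine mul_le_mul hzk ((abs_exp_sub_sum_le (abs_mul_mul_le hz hzT hl hG) _).trans ?_)
    (abs_nonneg _) (by positivity)
  refine mul_le_mul_of_nonneg_left ?_ (Real.exp_pos _).le
  exact pow_le_pow_of_le_one (by norm_num) (by norm_num) (by omega)

end Taylor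

section Auxiliary

/-- Value at `(z, y)` of the integer polynomial in two variables of degree less than `K` in the
first and less than `L` in the second one, with coefficient family `p`. For `y = exp (h * z)` this
is the auxiliary function of Gel'fond's method. -/
def biEval {R : Type*} [CommRing R] {K L : ℕ} (p : Fin K × Fin L → ℤ) (z y : R) : R :=
  ∑ i, (p i : R) * (z ^ (i.1 : ℕ) * y ^ (i.2 : ℕ))

variable {K L W : ℕ} {T h G : ℝ} {p : Fin K × Fin L → ℤ}

theorem exists_int_sum_taylorCoeff_small (hT : 1 ≤ T) (hG : L * T * |h| ≤ G)
    (hB : K * L * (T ^ K * Real.exp (3 * G)) ≤ 2 ^ W) (hW : 2 ≤ W) (hKL : 100 * W < K * L) :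
    ∃ p : Fin K × Fin L → ℤ, p ≠ 0 ∧ (∀ i, |p i| ≤ 2 ^ W) ∧ ∀ m < 10 * W,
      |∑ i, (p i : ℝ) * taylorCoeff T h m i.1 i.2| ≤ (1 / 2) ^ (7 * W) := by
  have hG0 : 0 ≤ G := le_trans (by positivity) hG
  have hsum (m : Fin (10 * W)) :
      ∑ i : Fin K × Fin L, |taylorCoeff T h m i.1 i.2| ≤ (2 : ℝ) ^ W := by
    refine (Finset.sum_le_card_nsmul _ _ (T ^ K * Real.exp (3 * G)) fun i _ ↦
      (abs_taylorCoeff_le hT _ i.1.2 i.2.2 hG).trans (by gcongr; linarith)).trans ?_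
    simpa using hB
  have hcard : (2 * 2 ^ (9 * W) + 1) ^ Fintype.card (Fin (10 * W)) <
      (2 ^ W + 1) ^ Fintype.card (Fin K × Fin L) := by
    simp only [Fintype.card_fin, Fintype.card_prod]
    have h9 : 2 * 2 ^ (9 * W) + 1 ≤ 2 ^ (10 * W) := by
      have : 2 ^ (9 * W) * 2 ^ 2 ≤ 2 ^ (10 * W) := by
        rw [← pow_add]
        exact Nat.pow_le_pow_right two_pos (by omega)
      have := Nat.one_le_two_pow (n := 9 * W)
      omega
    calc _ ≤ (2 ^ (10 * W)) ^ (10 * W) := Nat.pow_le_pow_left h9 _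
      _ = (2 ^ W) ^ (100 * W) := by rw [← pow_mul, ← pow_mul]; congr 1; ring
      _ < (2 ^ W) ^ (K * L) := Nat.pow_lt_pow_right (Nat.one_lt_two_pow (by omega)) hKL
      _ ≤ _ := Nat.pow_le_pow_left (Nat.le_succ _) _
  have hlevel : ((2 ^ W : ℕ) : ℝ) * 2 ^ W ≤ ((2 ^ (9 * W) : ℕ) : ℝ) * (1 / 2) ^ (7 * W) := by
    rw [one_div, inv_pow, ← div_eq_mul_inv, le_div_iff₀ (by positivity)]
    push_cast
    rw [← pow_add, ← pow_add]
    exact (congrArg _ (by ring)).le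
  obtain ⟨p, hp0, hpB, hp⟩ := exists_int_ne_zero_abs_sum_mul_le
    (fun (m : Fin (10 * W)) (i : Fin K × Fin L) ↦ taylorCoeff T h m i.1 i.2)
    (by positivity) hsum hlevel hcard
  exact ⟨p, hp0, mod_cast hpB, fun m hm ↦ hp ⟨m, hm⟩⟩

theorem abs_sum_mul_le_card_mul {B C : ℝ} (hB : 0 ≤ B) (hpB : ∀ i, |(p i : ℝ)| ≤ B)
    {f : Fin K × Fin L → ℝ} (hf : ∀ i, |f i| ≤ C) : |∑ i, (p i : ℝ) * f i| ≤ B * (K * L * C) := by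
  refine (abs_sum_mul_le_mul_sum _ f hpB).trans (mul_le_mul_of_nonneg_left ?_ hB)
  simpa using Finset.sum_le_card_nsmul Finset.univ (fun i ↦ |f i|) C fun i _ ↦ hf i

theorem abs_biEval_exp_le (hT : 1 ≤ T) (hG : L * T * |h| ≤ G)
    (hB : K * L * (T ^ K * Real.exp (3 * G)) ≤ 2 ^ W) (hKW : K ≤ W) (hpB : ∀ i, |p i| ≤ 2 ^ W)
    (hp : ∀ m < 10 * W, |∑ i, (p i : ℝ) * taylorCoeff T h m i.1 i.2| ≤ (1 / 2) ^ (7 * W))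
    {z : ℝ} (hz : 0 ≤ z) (hzT : z ≤ T) :
    |biEval p z (Real.exp (h * z))| ≤ 11 * (1 / 2) ^ (6 * W) := by
  set taylor : ℝ := ∑ m ∈ Finset.range (10 * W), (z / T) ^ m *
    ∑ i, (p i : ℝ) * taylorCoeff T h m i.1 i.2
  have hswap : taylor = ∑ i, (p i : ℝ) *
      ∑ m ∈ Finset.range (10 * W), (z / T) ^ m * taylorCoeff T h m i.1 i.2 := by
    simp only [taylor, Finset.mul_sum, mul_left_comm (p _ : ℝ)]
    exact Finset.sum_comm
  have htaylor : |taylor| ≤ 10 * W * (1 / 2) ^ (7 * W) := by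
    refine (Finset.abs_sum_le_sum_abs _ _).trans ((Finset.sum_le_card_nsmul _ _
      ((1 / 2) ^ (7 * W)) fun m hm ↦ ?_).trans (by simp))
    rw [abs_mul, abs_of_nonneg (by positivity)]
    exact (mul_le_of_le_one_left (abs_nonneg _) (pow_le_one₀ (by positivity)
      (div_le_one_of_le₀ hzT (by positivity)))).trans (hp m (Finset.mem_range.mp hm))
  have hrem : |biEval p z (Real.exp (h * z)) - taylor| ≤
      2 ^ W * (K * L * (T ^ K * Real.exp (3 * G) * (1 / 2) ^ (9 * W))) := by
    rw [hswap, biEval, ← Finset.sum_sub_distrib]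
    simp only [← mul_sub]
    refine abs_sum_mul_le_card_mul (by positivity) (fun i ↦ mod_cast hpB i) fun i ↦ ?_
    refine (abs_pow_mul_exp_sub_sum_taylorCoeff_le hT i.1.2 i.2.2 hG hz hzT
      (by omega : K ≤ 10 * W)).trans (mul_le_mul_of_nonneg_left ?_ (by positivity))
    exact pow_le_pow_of_le_one (by norm_num) (by norm_num) (by omega)
  have hW : (W : ℝ) ≤ 2 ^ W := mod_cast W.lt_two_pow_self.le
  have hhalf : (2 : ℝ) ^ W * (1 / 2) ^ W = 1 := by rw [← mul_pow]; norm_num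
  calc |biEval p z (Real.exp (h * z))|
      ≤ |taylor| + |biEval p z (Real.exp (h * z)) - taylor| := by
        simpa using abs_add_le taylor (biEval p z (Real.exp (h * z)) - taylor)
    _ ≤ 10 * 2 ^ W * (1 / 2) ^ (7 * W) +
        2 ^ W * ((K * L * (T ^ K * Real.exp (3 * G))) * (1 / 2) ^ (9 * W)) := by
        refine add_le_add (htaylor.trans (by gcongr)) (hrem.trans_eq (by ring))
    _ ≤ 10 * 2 ^ W * (1 / 2) ^ (7 * W) + 2 ^ W * (2 ^ W * (1 / 2) ^ (9 * W)) := by gcongr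
    _ = (2 ^ W * (1 / 2) ^ W) * (10 * (1 / 2) ^ (6 * W)) +
        (2 ^ W * (1 / 2) ^ W) ^ 2 * ((1 / 2) ^ (6 * W) * (1 / 2) ^ W) := by ring
    _ ≤ 11 * (1 / 2) ^ (6 * W) := by
        rw [hhalf]
        have : (1 / 2 : ℝ) ^ (6 * W) * (1 / 2) ^ W ≤ (1 / 2) ^ (6 * W) :=
          mul_le_of_le_one_right (by positivity) (pow_le_one₀ (by norm_num) (by norm_num))
        linarith

theorem abs_biEval_mul_sub_le {B Y ε z y c : ℝ} (hB : 0 ≤ B)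
    (hpB : ∀ i, |(p i : ℝ)| ≤ B) (hT : 1 ≤ T) (hz : 0 ≤ z) (hzT : z ≤ T)
    (hy : ∀ l < L, |y ^ l| ≤ Y) (hc : ∀ l < L, |c ^ l - 1| ≤ ε) :
    |biEval p z (y * c) - biEval p z y| ≤ B * (K * L * (T ^ K * (Y * ε))) := by
  rw [biEval, biEval, ← Finset.sum_sub_distrib]
  simp only [← mul_sub]
  refine abs_sum_mul_le_card_mul hB hpB fun i ↦ ?_
  have hzk : z ^ (i.1 : ℕ) ≤ T ^ K :=
    (pow_le_pow_left₀ hz hzT _).trans (pow_le_pow_right₀ hT i.1.2.le)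
  rw [mul_pow, ← mul_sub_one, abs_mul, abs_mul, abs_of_nonneg (pow_nonneg hz _)]
  have hY := hy _ i.2.2
  exact mul_le_mul hzk (mul_le_mul hY (hc _ i.2.2) (abs_nonneg _) ((abs_nonneg _).trans hY))
    (by positivity) (by positivity)

theorem eq_zero_of_biEval_eq_zero {R : Type*} [CommRing R] [IsDomain R] [CharZero R] {E S q : ℕ}
    {η κ : R} (hη : η ≠ 0) (hinj : Function.Injective fun l : ℕ ↦ η ^ l) (hκ : κ ≠ 0)
    (hK : 0 < K) (hEq : E ≤ q) (hES : K * L ≤ E * S)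
    (h : ∀ e < E + L, ∀ s < S, biEval p ((e + q * s : ℕ) : R) (η ^ e * κ ^ s) = 0) : p = 0 := by
  classical
  let P (l : Fin L) : Polynomial R := Polynomial.ofFn K fun k ↦ (p (k, l) : R)
  let Z : Finset R := (Finset.range E ×ˢ Finset.range S).image fun x ↦ ((x.1 + q * x.2 : ℕ) : R)
  have hZcard : Z.card = E * S := by
    rw [Finset.card_image_of_injOn, Finset.card_product, Finset.card_range, Finset.card_range]
    rintro ⟨e, s⟩ hes ⟨e', s'⟩ hes' heq
    simp only [Finset.coe_product, Finset.coe_range, Set.mem_prod, Set.mem_Iio] at hes hes'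
    have heq : e + q * s = e' + q * s' := Nat.cast_injective heq
    have hdiv := congrArg (· / q) heq
    have hmod := congrArg (· % q) heq
    have hq : 0 < q := by omega
    simp only [Nat.add_mul_div_left _ _ hq, Nat.add_mul_mod_self_left,
      Nat.div_eq_of_lt (hes.1.trans_le hEq), Nat.div_eq_of_lt (hes'.1.trans_le hEq),
      Nat.mod_eq_of_lt (hes.1.trans_le hEq), Nat.mod_eq_of_lt (hes'.1.trans_le hEq),
      zero_add] at hdiv hmod
    rw [hdiv, hmod]
  have hP := eq_zero_of_expPoly_vanish (x := fun l : Fin L ↦ η ^ (l : ℕ))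
    (fun l l' hll ↦ Fin.ext (hinj hll)) P (fun l ↦ Polynomial.ofFn_natDegree_lt hK _) Z
    (hES.trans hZcard.ge) fun z hz ↦ by
      obtain ⟨⟨e, s⟩, hes, rfl⟩ := Finset.mem_image.mp hz
      rw [Finset.mem_product, Finset.mem_range, Finset.mem_range] at hes
      have hy : η ^ e * κ ^ s ≠ 0 := mul_ne_zero (pow_ne_zero _ hη) (pow_ne_zero _ hκ)
      refine ⟨fun l ↦ (η ^ e * κ ^ s) ^ (l : ℕ), fun l ↦ pow_ne_zero _ hy, fun i hi ↦ ?_⟩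
      rw [← h (e + i) (by omega) s hes.2, biEval, Fintype.sum_prod_type, Finset.sum_comm]
      refine Finset.sum_congr rfl fun l _ ↦ ?_
      simp only [P, Polynomial.ofFn_eq_sum_monomial, Polynomial.eval_finsetSum,
        Polynomial.eval_monomial, Finset.sum_mul]
      refine Finset.sum_congr rfl fun k _ ↦ ?_
      push_cast
      ring
  ext ⟨k, l⟩
  have hl := congrFun (Polynomial.injective_ofFn K ((hP l).trans (Polynomial.ofFn_zero K).symm)) k
  simpa using hl

end Auxiliary

section RootPair

open Polynomial

/-- `α` is the real root and `β` a complex root of the characteristic polynomial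
`X ^ 3 - X ^ 2 - 1` of the recurrence; the last two fields say that `β` and its conjugate have sum
`1 - α` and product `α ^ 2 - α = 1 / α`. -/
structure IsRootPair (α : ℝ) (β : ℂ) : Prop where
  cube : α ^ 3 = α ^ 2 + 1
  lower : 1.46 < α
  upper : α < 1.47
  re : β.re = (1 - α) / 2
  re_sq_add_im_sq : β.re ^ 2 + β.im ^ 2 = α ^ 2 - α

theorem exists_isRootPair : ∃ α β, IsRootPair α β := by
  have hcont : ContinuousOn (fun x : ℝ ↦ x ^ 3 - x ^ 2 - 1) (Set.Icc 1.46 1.47) := by fun_prop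
  have hsign : (0 : ℝ) ∈ Set.Ioo ((1.46 : ℝ) ^ 3 - 1.46 ^ 2 - 1) (1.47 ^ 3 - 1.47 ^ 2 - 1) := by
    constructor <;> norm_num
  obtain ⟨α, ⟨hlo, hhi⟩, hα⟩ := intermediate_value_Ioo (by norm_num) hcont hsign
  simp only at hα
  refine ⟨α, ⟨(1 - α) / 2, √(α ^ 2 - α - ((1 - α) / 2) ^ 2)⟩, by linarith, hlo, hhi, rfl, ?_⟩
  simp only
  rw [Real.sq_sqrt (by nlinarith)]
  ring

/-- The norm of `a + b * α + c * α ^ 2` from `ℚ(α)` to `ℚ`, for a root `α` of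
`X ^ 3 - X ^ 2 - 1`. -/
def normForm {R : Type*} [CommRing R] (a b c : R) : R :=
  a ^ 3 + b ^ 3 + c ^ 3 + a ^ 2 * b + a ^ 2 * c - 2 * a * c ^ 2 + b ^ 2 * c - 3 * a * b * c

theorem intCast_normForm {R : Type*} [CommRing R] (a b c : ℤ) :
    ((normForm a b c : ℤ) : R) = normForm (a : R) b c := by
  simp only [normForm]
  push_cast
  rfl

theorem even_of_even_normForm {a b c : ℤ} (h : Even (normForm a b c)) :
    Even a ∧ Even b ∧ Even c := by
  have hmod : ∀ x y z : ZMod 2, normForm x y z = 0 → x = 0 ∧ y = 0 ∧ z = 0 := by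
    unfold normForm
    decide
  simp only [← ZMod.intCast_eq_zero_iff_even, intCast_normForm] at h ⊢
  exact hmod _ _ _ h

theorem eq_zero_of_normForm_eq_zero {a b c : ℤ} (h : normForm a b c = 0) :
    a = 0 ∧ b = 0 ∧ c = 0 := by
  induction hm : a.natAbs + b.natAbs + c.natAbs using Nat.strong_induction_on
    generalizing a b c with
  | _ m ih =>
    obtain ⟨⟨a, rfl⟩, ⟨b, rfl⟩, ⟨c, rfl⟩⟩ := even_of_even_normForm (h ▸ Even.zero)
    have hhalf : normForm a b c = 0 := by
      have : 8 * normForm a b c = 0 := by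
        unfold normForm at h ⊢
        linear_combination h
      omega
    by_cases h0 : m = 0
    · omega
    · have := ih _ (by omega) hhalf rfl
      omega

namespace IsRootPair

variable {α : ℝ} {β : ℂ} (H : IsRootPair α β)
include H

theorem pos : 0 < α := by linarith [H.lower]

theorem one_lt : 1 < α := by linarith [H.lower]

theorem beta_cube : β ^ 3 = β ^ 2 + 1 := by
  have hquad : β ^ 2 - 2 * β.re * β + (β.re ^ 2 + β.im ^ 2 : ℝ) = 0 := by
    apply Complex.ext <;> simp [pow_two] <;> ring
  have htrace : (α : ℂ) = 1 - 2 * β.re := by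
    have : α = 1 - 2 * β.re := by linarith [H.re]
    exact_mod_cast this
  have hcube : (α : ℂ) ^ 3 = α ^ 2 + 1 := mod_cast H.cube
  rw [H.re_sq_add_im_sq] at hquad
  push_cast at hquad
  linear_combination (β - α) * hquad + hcube + (β ^ 2 - α * β) * htrace

theorem mul_norm_sq_eq_normForm (a b c : ℝ) :
    (a + b * α + c * α ^ 2) * ‖(a + b * β + c * β ^ 2 : ℂ)‖ ^ 2 = normForm a b c := by
  have him : β.im ^ 2 = α ^ 2 - α - ((1 - α) / 2) ^ 2 := by
    linarith [H.re ▸ H.re_sq_add_im_sq]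
  have hnorm : ‖(a + b * β + c * β ^ 2 : ℂ)‖ ^ 2 =
      (a + b * β.re + c * (β.re ^ 2 - β.im ^ 2)) ^ 2 + (b + 2 * c * β.re) ^ 2 * β.im ^ 2 := by
    rw [Complex.sq_norm, Complex.normSq_apply]
    simp only [pow_two, Complex.add_re, Complex.ofReal_re, Complex.mul_re, Complex.ofReal_im,
      zero_mul, sub_zero, Complex.mul_im, add_zero, Complex.add_im, zero_add]
    ring
  rw [hnorm, H.re, him, normForm]
  linear_combination (α ^ 3 * c ^ 3 - α ^ 2 * c ^ 3 - 2 * a * c ^ 2 - 3 * a * b * c + b ^ 3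
    + b ^ 2 * c + c ^ 3) * H.cube

theorem exists_aeval_eq (p : ℤ[X]) :
    ∃ a b c : ℤ, aeval α p = a + b * α + c * α ^ 2 ∧ aeval β p = a + b * β + c * β ^ 2 := by
  set f : ℤ[X] := X ^ 3 - X ^ 2 - 1 with hf
  have hmonic : f.Monic := by rw [hf]; monicity!
  have hdeg : f.natDegree = 3 := by rw [hf]; compute_degree!
  have hlt : (p %ₘ f).natDegree < 3 := hdeg ▸ natDegree_modByMonic_lt p hmonic fun h ↦ by
    simp [h] at hdeg
  have hreduce {A : Type} [CommRing A] (x : A) (hx : x ^ 3 = x ^ 2 + 1) : aeval x p =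
      (p %ₘ f).coeff 0 + (p %ₘ f).coeff 1 * x + (p %ₘ f).coeff 2 * x ^ 2 := by
    have hfx : aeval x f = 0 := by
      simp [hf, hx]
    rw [← aeval_modByMonic_eq_self_of_root hfx, aeval_eq_sum_range' hlt]
    simp [Finset.sum_range_succ]
  exact ⟨_, _, _, hreduce α H.cube, hreduce β H.beta_cube⟩

/-- Liouville's inequality. -/
theorem one_le_abs_aeval_mul_norm_sq {p : ℤ[X]} (hp : aeval α p ≠ 0) :
    1 ≤ |aeval α p| * ‖aeval β p‖ ^ 2 := by
  obtain ⟨a, b, c, hα, hβ⟩ := H.exists_aeval_eq p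
  have hnorm : aeval α p * ‖aeval β p‖ ^ 2 = (normForm a b c : ℤ) := by
    rw [hα, hβ, intCast_normForm]
    exact_mod_cast H.mul_norm_sq_eq_normForm a b c
  have hne : normForm a b c ≠ 0 := fun h0 ↦ by
    obtain ⟨rfl, rfl, rfl⟩ := eq_zero_of_normForm_eq_zero h0
    simp [hα] at hp
  calc (1 : ℝ) ≤ |((normForm a b c : ℤ) : ℝ)| := mod_cast Int.one_le_abs hne
    _ = |aeval α p| * ‖aeval β p‖ ^ 2 := by
      rw [← hnorm, abs_mul, abs_of_nonneg (sq_nonneg ‖aeval β p‖)]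

theorem aeval_beta_eq_zero {p : ℤ[X]} (hp : aeval α p = 0) : aeval β p = 0 := by
  obtain ⟨a, b, c, hα, hβ⟩ := H.exists_aeval_eq p
  have hnorm := H.mul_norm_sq_eq_normForm a b c
  push_cast at hnorm
  rw [← hα, hp, zero_mul] at hnorm
  have hzero : normForm a b c = 0 := by
    exact_mod_cast (intCast_normForm a b c).trans hnorm.symm
  obtain ⟨rfl, rfl, rfl⟩ := eq_zero_of_normForm_eq_zero hzero
  simp [hβ]

theorem norm_beta_lt_one : ‖β‖ < 1 := by
  rw [← sq_lt_one_iff₀ (norm_nonneg β), Complex.sq_norm, Complex.normSq_apply]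
  nlinarith [H.re_sq_add_im_sq, H.lower, H.upper]

end IsRootPair

end RootPair

section Core

open Polynomial

variable {α : ℝ} {β : ℂ} {K L W D : ℕ} {p : Fin K × Fin L → ℤ} {T B G h y : ℝ}

/-- `D * y` belongs to `ℤ[α]` and its conjugate, obtained by replacing `α` with `β`, has absolute
value at most `B`. -/
def HasConjugateBound (α : ℝ) (β : ℂ) (D : ℕ) (B y : ℝ) : Prop :=
  ∃ A : ℤ[X], aeval α A = D * y ∧ ‖aeval β A‖ ≤ B

theorem HasConjugateBound.mul {D' : ℕ} {B' y' : ℝ} (h : HasConjugateBound α β D B y)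
    (h' : HasConjugateBound α β D' B' y') : HasConjugateBound α β (D * D') (B * B') (y * y') := by
  obtain ⟨A, hα, hβ⟩ := h
  obtain ⟨A', hα', hβ'⟩ := h'
  refine ⟨A * A', ?_, ?_⟩
  · rw [map_mul, hα, hα', Nat.cast_mul]
    ring
  · rw [map_mul, norm_mul]
    exact mul_le_mul hβ hβ' (norm_nonneg _) ((norm_nonneg _).trans hβ)

theorem HasConjugateBound.pow_of_le (h : HasConjugateBound α β D B y) (hDB : D ≤ B) {l N : ℕ}
    (hl : l ≤ N) : HasConjugateBound α β (D ^ N) (B ^ N) (y ^ l) := by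
  obtain ⟨A, hα, hβ⟩ := h
  obtain ⟨m, rfl⟩ := Nat.exists_eq_add_of_le hl
  refine ⟨A ^ l * (D : ℤ[X]) ^ m, ?_, ?_⟩
  · rw [map_mul, map_pow, map_pow, map_natCast, hα, Nat.cast_pow]
    ring
  · rw [map_mul, map_pow, map_pow, map_natCast, norm_mul, norm_pow, norm_pow,
      Complex.norm_natCast, pow_add]
    have hB : 0 ≤ B := (Nat.cast_nonneg D).trans hDB
    gcongr

theorem HasConjugateBound.biEval (hy : HasConjugateBound α β D B y) (hDB : D ≤ B) (hT : 1 ≤ T)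
    {C : ℝ} (hpC : ∀ i, |(p i : ℝ)| ≤ C) {z : ℕ} (hz : z ≤ T) :
    HasConjugateBound α β (D ^ L) (K * L * (C * (T ^ K * B ^ L))) (biEval p (z : ℝ) y) := by
  choose A hα hβ using fun l : Fin L ↦ hy.pow_of_le hDB l.2.le
  refine ⟨∑ i, (p i : ℤ[X]) * ((z : ℤ[X]) ^ (i.1 : ℕ) * A i.2), ?_, ?_⟩ <;>
    simp only [map_sum, map_mul, map_pow, map_intCast, map_natCast]
  · simp only [NarayanaCows.biEval, hα, Finset.mul_sum]
    exact Finset.sum_congr rfl fun i _ ↦ by ring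
  · have hterm (i : Fin K × Fin L) :
        ‖(p i : ℂ) * ((z : ℂ) ^ (i.1 : ℕ) * aeval β (A i.2))‖ ≤ C * (T ^ K * B ^ L) := by
      have hzk : (z : ℝ) ^ (i.1 : ℕ) ≤ T ^ K :=
        (pow_le_pow_left₀ z.cast_nonneg hz _).trans (pow_le_pow_right₀ hT i.1.2.le)
      rw [norm_mul, norm_mul, norm_pow, Complex.norm_natCast, Complex.norm_intCast]
      have hC : 0 ≤ C := (abs_nonneg _).trans (hpC i)
      gcongr
      exacts [hpC i, hβ i.2]
    exact (norm_sum_le_of_le _ fun i _ ↦ hterm i).trans_eq (by simp)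

theorem IsRootPair.one_le_mul_abs_mul_sq (H : IsRootPair α β) (hy : HasConjugateBound α β D B y)
    (hD : D ≠ 0) (hne : y ≠ 0) : 1 ≤ D * |y| * B ^ 2 := by
  obtain ⟨A, hAα, hAβ⟩ := hy
  calc (1 : ℝ) ≤ |aeval α A| * ‖aeval β A‖ ^ 2 :=
        H.one_le_abs_aeval_mul_norm_sq (by rw [hAα]; positivity)
    _ ≤ D * |y| * B ^ 2 := by
        rw [hAα, abs_mul, Nat.abs_cast]
        gcongr

theorem IsRootPair.biEval_eq_zero (H : IsRootPair α β) (hy : HasConjugateBound α β D B y)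
    (hD : D ≠ 0) (hDB : D ≤ B) (hT : 1 ≤ T) (hKL : 0 < K * L) (hW : 5 ≤ W)
    (hsize : K * L * (T ^ K * B ^ L) ≤ 2 ^ W) (hp : ∀ i, |p i| ≤ 2 ^ W) {z : ℕ} (hz : z ≤ T)
    (hsmall : |biEval p (z : ℝ) y| ≤ 12 * (1 / 2) ^ (6 * W)) : biEval p (z : ℝ) y = 0 := by
  by_contra hne
  have hB : 0 ≤ B := (Nat.cast_nonneg D).trans hDB
  have hDL : (D : ℝ) ^ L ≤ 2 ^ W := by
    have hKL : (1 : ℝ) ≤ K * L := mod_cast hKL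
    calc (D : ℝ) ^ L ≤ B ^ L := by gcongr
      _ ≤ K * L * (T ^ K * B ^ L) := by
        rw [← mul_assoc]
        exact le_mul_of_one_le_left (by positivity) (one_le_mul_of_one_le_of_one_le hKL
          (one_le_pow₀ hT))
      _ ≤ 2 ^ W := hsize
  have hbound := H.one_le_mul_abs_mul_sq (hy.biEval hDB hT (C := 2 ^ W)
    (fun i ↦ mod_cast hp i) hz) (pow_ne_zero L hD) hne
  have hlt : (12 : ℝ) * (1 / 2) ^ W < 1 :=
    calc (12 : ℝ) * (1 / 2) ^ W ≤ 12 * (1 / 2) ^ 5 :=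
          mul_le_mul_of_nonneg_left (pow_le_pow_of_le_one (by norm_num) (by norm_num) hW)
            (by norm_num)
      _ < 1 := by norm_num
  refine hlt.not_ge (hbound.trans ?_)
  calc ((D ^ L : ℕ) : ℝ) * |biEval p (z : ℝ) y| * (K * L * (2 ^ W * (T ^ K * B ^ L))) ^ 2
      = (D : ℝ) ^ L * |biEval p (z : ℝ) y| * (2 ^ W * (K * L * (T ^ K * B ^ L))) ^ 2 := by
        push_cast
        ring
    _ ≤ 2 ^ W * (12 * (1 / 2) ^ (6 * W)) * (2 ^ W * 2 ^ W) ^ 2 := by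
        gcongr
    _ = 12 * (1 / 2) ^ W := by
        have hinv : (2 : ℝ) ^ W * (1 / 2) ^ W = 1 := by rw [← mul_pow]; norm_num
        rw [mul_comm 6 W, pow_mul]
        linear_combination 12 * (1 / 2) ^ W * (((2 : ℝ) ^ W * (1 / 2) ^ W) ^ 4
          + ((2 : ℝ) ^ W * (1 / 2) ^ W) ^ 3 + ((2 : ℝ) ^ W * (1 / 2) ^ W) ^ 2
          + (2 : ℝ) ^ W * (1 / 2) ^ W + 1) * hinv

theorem abs_biEval_exp_mul_le (hT : 1 ≤ T) (hG : L * T * |h| ≤ G)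
    (hB : K * L * (T ^ K * Real.exp (3 * G)) ≤ 2 ^ W) (hKW : K ≤ W) (hpB : ∀ i, |p i| ≤ 2 ^ W)
    (hp : ∀ m < 10 * W, |∑ i, (p i : ℝ) * taylorCoeff T h m i.1 i.2| ≤ (1 / 2) ^ (7 * W))
    {z c : ℝ} (hz : 0 ≤ z) (hzT : z ≤ T) (hc : ∀ l < L, |c ^ l - 1| ≤ (1 / 2) ^ (8 * W)) :
    |biEval p z (Real.exp (h * z) * c)| ≤ 12 * (1 / 2) ^ (6 * W) := by
  have hG0 : 0 ≤ G := le_trans (by positivity) hG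
  have hexp (l : ℕ) (hl : l < L) : |Real.exp (h * z) ^ l| ≤ Real.exp (3 * G) := by
    rw [← Real.exp_nat_mul, Real.abs_exp, Real.exp_le_exp]
    calc l * (h * z) ≤ l * (|h| * z) := by
          gcongr
          exact le_abs_self h
      _ ≤ L * (|h| * T) := by gcongr
      _ = L * T * |h| := by ring
      _ ≤ 3 * G := by linarith
  have hperturb := abs_biEval_mul_sub_le (B := 2 ^ W) (by positivity) (fun i ↦ mod_cast hpB i)
    hT hz hzT hexp hc
  have hmain := abs_biEval_exp_le hT hG hB hKW hpB hp hz hzT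
  have hsmall : 2 ^ W * (K * L * (T ^ K * (Real.exp (3 * G) * (1 / 2) ^ (8 * W))))
      ≤ (1 / 2 : ℝ) ^ (6 * W) :=
    calc 2 ^ W * (K * L * (T ^ K * (Real.exp (3 * G) * (1 / 2) ^ (8 * W))))
        = 2 ^ W * (K * L * (T ^ K * Real.exp (3 * G))) * (1 / 2) ^ (8 * W) := by ring
      _ ≤ 2 ^ W * 2 ^ W * (1 / 2) ^ (8 * W) := by gcongr
      _ = (1 / 2) ^ (6 * W) := by
        rw [show 8 * W = W + W + 6 * W by ring, pow_add, pow_add, ← mul_assoc,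
          mul_mul_mul_comm, ← mul_pow]
        norm_num
  linarith [abs_sub_abs_le_abs_sub (biEval p z (Real.exp (h * z) * c))
    (biEval p z (Real.exp (h * z)))]

/-- The Gel'fond–Schneider method: `κ ^ s` replaces `η ^ (q * s)` in the values of the auxiliary
function because it has small height. -/
theorem IsRootPair.exists_lt_abs_pow_sub_one (H : IsRootPair α β) {E S q : ℕ} {η κ ν : ℝ}
    (hK : 0 < K) (hL : 0 < L) (hW : 5 ≤ W) (hqS : 2 ≤ q * S) (hη : 0 < η) (hη1 : η ≠ 1)
    (hκ0 : κ ≠ 0) (hκ : κ = η ^ q * ν) (hEq : E + L ≤ q) (hES : K * L ≤ E * S)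
    (hKL : 100 * W < K * L) (hKW : K ≤ W) (hG : L * (q * S : ℕ) * |Real.log η| ≤ G)
    (hD : D ≠ 0) (hDB : D ≤ B)
    (hconj : ∀ e < E + L, ∀ s < S, HasConjugateBound α β D B (η ^ e * κ ^ s))
    (hsize : K * L * ((q * S : ℕ) ^ K * (B ^ L * Real.exp (3 * G))) ≤ 2 ^ W) :
    ∃ i ≤ S * L, (1 / 2) ^ (8 * W) < |ν ^ i - 1| := by
  by_contra! hν
  have hT : (2 : ℝ) ≤ (q * S : ℕ) := mod_cast hqS
  set T := ((q * S : ℕ) : ℝ)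
  have hT1 : 1 ≤ T := one_le_two.trans hT
  have hG0 : 0 ≤ G := le_trans (by positivity) hG
  have hexp : 1 ≤ Real.exp (3 * G) := Real.one_le_exp (by positivity)
  have hB1 : 1 ≤ B := le_trans (mod_cast Nat.one_le_iff_ne_zero.mpr hD) hDB
  have hBL : 1 ≤ B ^ L := one_le_pow₀ hB1
  have hexpW : K * L * (T ^ K * Real.exp (3 * G)) ≤ 2 ^ W := le_trans (by
    gcongr
    exact le_mul_of_one_le_left (by positivity) hBL) hsize
  have hBW : K * L * (T ^ K * B ^ L) ≤ 2 ^ W := le_trans (by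
    gcongr
    exact le_mul_of_one_le_right (by positivity) hexp) hsize
  obtain ⟨p, hp0, hpB, hp⟩ := exists_int_sum_taylorCoeff_small (K := K) (L := L) hT1 hG hexpW
    (by omega) hKL
  refine hp0 (eq_zero_of_biEval_eq_zero hη.ne' (pow_right_injective₀ hη hη1) hκ0 hK
    (le_of_add_le_left hEq) hES fun e he s hs ↦ ?_)
  have hz : ((e + q * s : ℕ) : ℝ) ≤ T := Nat.cast_le.mpr <| by
    calc e + q * s ≤ q + q * s := by omega
      _ = q * (s + 1) := by ring
      _ ≤ q * S := Nat.mul_le_mul_left q hs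
  refine H.biEval_eq_zero (hconj e he s hs) hD hDB hT1 (Nat.mul_pos hK hL) hW hBW hpB hz ?_
  have hval : η ^ e * κ ^ s = Real.exp (Real.log η * (e + q * s : ℕ)) * ν ^ s := by
    rw [mul_comm (Real.log η), Real.exp_nat_mul, Real.exp_log hη, hκ]
    ring
  rw [hval]
  refine abs_biEval_exp_mul_le hT1 hG hexpW hKW hpB hp (Nat.cast_nonneg _) hz fun l hl ↦ ?_
  rw [← pow_mul]
  exact hν _ (Nat.mul_le_mul hs.le hl.le)

end Core

section Parameters

theorem sq_le_two_pow {n : ℕ} (hn : 4 ≤ n) : n ^ 2 ≤ 2 ^ n := by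
  induction n, hn using Nat.le_induction with
  | base => norm_num
  | succ n hn ih =>
    rw [pow_succ 2 n]
    nlinarith

theorem pow_le_two_pow {k t : ℕ} (hk : 3 ≤ k) (ht : k * (k + 1) ≤ t) : t ^ k ≤ 2 ^ t := by
  set s := t / k
  have hs : k + 1 ≤ s := (Nat.le_div_iff_mul_le (by omega)).mpr (by linarith)
  have hts : t ≤ s ^ 2 := by
    have : t < k * (s + 1) := Nat.lt_mul_div_succ t (by omega)
    nlinarith
  calc t ^ k ≤ (2 ^ s) ^ k := Nat.pow_le_pow_left (hts.trans (sq_le_two_pow (by omega))) k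
    _ = 2 ^ (s * k) := (pow_mul 2 s k).symm
    _ ≤ 2 ^ t := Nat.pow_le_pow_right two_pos (Nat.div_mul_le_self t k)

theorem mul_pow_le_pow {c t i j : ℕ} (hc : c ≤ t) (hij : i < j) : c * t ^ i ≤ t ^ j := by
  rcases Nat.eq_zero_or_pos t with rfl | ht
  · simp [Nat.le_zero.mp hc]
  · calc c * t ^ i ≤ t * t ^ i := Nat.mul_le_mul_right _ hc
      _ = t ^ (i + 1) := (pow_succ' t i).symm
      _ ≤ t ^ j := Nat.pow_le_pow_right ht hij

theorem le_two_mul_mul_div {m d : ℕ} (hd : 0 < d) (hdm : d ≤ m) : m ≤ 2 * (d * (m / d)) := by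
  have hpos : 0 < m / d := Nat.div_pos hdm hd
  have hlt := Nat.lt_mul_div_succ m hd
  nlinarith

theorem exists_grid {t a Y : ℕ} (ht : 2 ^ 100 ≤ t) (ha : a ≠ 0) (hat : a ≤ t ^ 6) (hY : Y ≠ 0)
    (haY : a * Y ≤ 3 * t ^ 14) :
    ∃ E S : ℕ, 0 < S ∧ S ≤ t ^ 16 ∧ t ^ 16 * (201 * t) ≤ E * S ∧
      10000 * (a * (E + 201 * t)) ≤ 2 * t ^ 16 ∧ 10000 * (Y * S) ≤ t ^ 16 := by
  have ha0 := Nat.pos_of_ne_zero ha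
  have hY0 := Nat.pos_of_ne_zero hY
  have hYt : 10000 * Y ≤ t ^ 16 := by
    have := mul_pow_le_pow (c := 30000) (i := 14) (j := 16) (le_trans (by norm_num) ht) (by omega)
    nlinarith
  have hat' : 10000 * a ≤ t ^ 16 := (Nat.mul_le_mul_left _ hat).trans
    (mul_pow_le_pow (le_trans (by norm_num) ht) (by omega))
  have hE := Nat.mul_div_le (t ^ 16) (10000 * a)
  have hS := Nat.mul_div_le (t ^ 16) (10000 * Y)
  have hE' := le_two_mul_mul_div (by omega) hat'
  have hS' := le_two_mul_mul_div (by omega) hYt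
  have hS0 : 0 < t ^ 16 / (10000 * Y) := Nat.div_pos hYt (by omega)
  set E := t ^ 16 / (10000 * a)
  set S := t ^ 16 / (10000 * Y)
  refine ⟨E, S, hS0, ?_, ?_, ?_, by linarith⟩
  · nlinarith
  · have hprod : t ^ 14 * t ^ 18 ≤ t ^ 14 * (1200000000 * (E * S)) :=
      calc t ^ 14 * t ^ 18 = t ^ 16 * t ^ 16 := by ring
        _ ≤ 2 * (10000 * a * E) * (2 * (10000 * Y * S)) := Nat.mul_le_mul hE' hS'
        _ = 400000000 * (E * S) * (a * Y) := by ring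
        _ ≤ 400000000 * (E * S) * (3 * t ^ 14) := Nat.mul_le_mul_left _ haY
        _ = t ^ 14 * (1200000000 * (E * S)) := by ring
    have hES := Nat.le_of_mul_le_mul_left hprod (by positivity)
    have := mul_pow_le_pow (c := 1200000000 * 201) (i := 17) (j := 18)
      (le_trans (by norm_num) ht) (by omega)
    linarith
  · have := mul_pow_le_pow (c := 10000 * 201) (i := 7) (j := 16)
      (le_trans (by norm_num) ht) (by omega)
    nlinarith [Nat.mul_le_mul_right t hat]

theorem exp_nine_mul_le (m : ℕ) : Real.exp (9 * m) ≤ 2 ^ (14 * m) := by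
  have h9 : Real.exp 9 ≤ 2 ^ 14 :=
    calc Real.exp 9 = Real.exp 1 ^ 9 := by rw [← Real.exp_nat_mul]; norm_num
      _ ≤ 2.72 ^ 9 := by
        gcongr
        linarith [Real.exp_one_lt_d9]
      _ ≤ 2 ^ 14 := by norm_num
  calc Real.exp (9 * m) = Real.exp 9 ^ m := by rw [← Real.exp_nat_mul, mul_comm]
    _ ≤ (2 ^ 14) ^ m := by gcongr
    _ = 2 ^ (14 * m) := (pow_mul 2 14 m).symm

theorem mul_pow_le_two_pow {t q S : ℕ} (ht : 2 ^ 100 ≤ t) (hq : q ≤ 2 * t ^ 20) (hS : S ≤ t ^ 16) :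
    t ^ 16 * (201 * t) * (q * S) ^ t ^ 16 ≤ 2 ^ t ^ 17 := by
  have h201 : 201 ≤ t := le_trans (by norm_num) ht
  have hqS : q * S ≤ t ^ 37 :=
    calc q * S ≤ 2 * t ^ 20 * t ^ 16 := Nat.mul_le_mul hq hS
      _ = 2 * t ^ 36 := by ring
      _ ≤ t ^ 37 := mul_pow_le_pow (by omega) (by omega)
  have hcard : t ^ 16 * (201 * t) ≤ t ^ t ^ 16 :=
    calc t ^ 16 * (201 * t) = 201 * t ^ 17 := by ring
      _ ≤ t ^ 18 := mul_pow_le_pow h201 (by omega)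
      _ ≤ t ^ t ^ 16 := Nat.pow_le_pow_right (by omega)
        (le_trans (by omega) (Nat.le_self_pow (by omega) t))
  calc t ^ 16 * (201 * t) * (q * S) ^ t ^ 16 ≤ t ^ t ^ 16 * (t ^ 37) ^ t ^ 16 := by gcongr
    _ = (t ^ 38) ^ t ^ 16 := by rw [← mul_pow, ← pow_succ']
    _ ≤ (2 ^ t) ^ t ^ 16 :=
      Nat.pow_le_pow_left (pow_le_two_pow (by omega) (le_trans (by norm_num) ht)) _
    _ = 2 ^ t ^ 17 := by rw [← pow_mul, ← pow_succ']

theorem auxiliary_size_le {t q S R Y N : ℕ} (ht : 2 ^ 100 ≤ t) (hq : q ≤ 2 * t ^ 20)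
    (hS : S ≤ t ^ 16) (hN : 10000 * N ≤ 2 * t ^ 16) (hY : 10000 * (Y * S) ≤ t ^ 16) (hR : R ≤ Y) :
    ((t ^ 16 : ℕ) : ℝ) * (201 * t : ℕ) * ((q * S : ℕ) ^ t ^ 16 *
      ((10 ^ (N + 3 * (Y * S))) ^ (201 * t) * Real.exp (3 * (3 * (201 * t * S * R : ℕ))))) ≤
      2 ^ (2 * t ^ 17) := by
  have hpow : ((t ^ 16 : ℕ) : ℝ) * (201 * t : ℕ) * (q * S : ℕ) ^ t ^ 16 ≤ 2 ^ t ^ 17 :=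
    mod_cast mul_pow_le_two_pow ht hq hS
  have hten : ((10 : ℝ) ^ (N + 3 * (Y * S))) ^ (201 * t) ≤
      2 ^ (4 * ((N + 3 * (Y * S)) * (201 * t))) := by
    rw [← pow_mul, pow_mul 2 4]
    gcongr
    norm_num
  have hexp := exp_nine_mul_le (201 * t * S * R)
  have hexponent : t ^ 17 + 4 * ((N + 3 * (Y * S)) * (201 * t)) + 14 * (201 * t * S * R) ≤
      2 * t ^ 17 := by
    have hSR : S * R ≤ Y * S := by rw [mul_comm Y]; exact Nat.mul_le_mul_left S hR
    have hsum : 804 * N + 2412 * (Y * S) + 2814 * (S * R) ≤ t ^ 16 := by linarith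
    calc _ = t ^ 17 + t * (804 * N + 2412 * (Y * S) + 2814 * (S * R)) := by ring
      _ ≤ t ^ 17 + t * t ^ 16 := by gcongr
      _ = 2 * t ^ 17 := by ring
  calc _ = ((t ^ 16 : ℕ) : ℝ) * (201 * t : ℕ) * (q * S : ℕ) ^ t ^ 16 *
        ((10 : ℝ) ^ (N + 3 * (Y * S))) ^ (201 * t) *
        Real.exp (9 * (201 * t * S * R : ℕ)) := by
        rw [show (3 * (3 * (201 * t * S * R : ℕ)) : ℝ) = 9 * (201 * t * S * R : ℕ) by ring]
        ring
    _ ≤ 2 ^ t ^ 17 * 2 ^ (4 * ((N + 3 * (Y * S)) * (201 * t))) * 2 ^ (14 * (201 * t * S * R)) := by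
        gcongr
    _ ≤ 2 ^ (2 * t ^ 17) := by
        rw [← pow_add, ← pow_add]
        exact pow_le_pow_right₀ one_le_two hexponent

end Parameters

section Approximation

/-- The data obtained from an approximation `b / a` of `x` with denominator at most `Q`, together
with the division `n = a * q + r`: if `M` is close to `n * x` then `M` is close to `q * b`, and `p`
measures the difference after a shift by `R`. -/
structure IsApproximation (x : ℝ) (Q n M a b q r p R : ℕ) : Prop where
  pos : 0 < a
  le : a ≤ Q
  num_le : b ≤ a
  dividend_eq : n = a * q + r
  remainder_lt : r < a
  add_eq : M + R = q * b + p
  shift_le : p ≤ 2 * R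
  three_le : 3 ≤ R
  mul_mul_le : a * Q * R ≤ n + a * Q * (a + 2)
  mul_abs_le : q * |a * x - b| ≤ R

theorem exists_nat_abs_mul_sub_le {x : ℝ} (hx0 : 0 ≤ x) (hx1 : x ≤ 1) {Q : ℕ} (hQ : 0 < Q) :
    ∃ a b : ℕ, 0 < a ∧ a ≤ Q ∧ b ≤ a ∧ |a * x - b| ≤ 1 / Q := by
  obtain ⟨b, a, ha0, haQ, h⟩ := Real.exists_int_int_abs_mul_sub_le x hQ
  lift a to ℕ using ha0.le
  have hQ' : (0 : ℝ) < Q := mod_cast hQ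
  have hlt : |a * x - b| < 1 := h.trans_lt (by rw [div_lt_one] <;> linarith)
  rw [Int.cast_natCast] at h
  rw [abs_lt] at hlt
  have hb0 : 0 ≤ b := by
    have : (-1 : ℝ) < b := by nlinarith [mul_nonneg a.cast_nonneg hx0]
    have : -1 < b := mod_cast this
    omega
  have hba : b ≤ a := by
    have : (b : ℝ) < a + 1 := by nlinarith [mul_le_of_le_one_right a.cast_nonneg hx1]
    have : b < a + 1 := mod_cast this
    omega
  lift b to ℕ using hb0
  refine ⟨a, b, mod_cast ha0, mod_cast haQ, mod_cast hba, h.trans ?_⟩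
  exact one_div_le_one_div_of_le hQ' (by linarith)

theorem abs_sub_mul_le {x δ : ℝ} (hx0 : 0 ≤ x) (hx1 : x ≤ 1) {n M a b q r : ℕ}
    (hn : n = a * q + r) (hr : r < a) (hM : |n * x - M| ≤ 1) (hab : |a * x - b| ≤ δ) :
    |(M : ℝ) - q * b| ≤ q * δ + a + 1 := by
  have hrx0 : 0 ≤ r * x := mul_nonneg r.cast_nonneg hx0
  have hrx1 : r * x ≤ a := (mul_le_of_le_one_right r.cast_nonneg hx1).trans (mod_cast hr.le)
  have hsplit : (n : ℝ) * x = q * (a * x - b) + q * b + r * x := by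
    rw [hn]
    push_cast
    ring
  have hprod : |q * (a * x - b)| ≤ q * δ := by
    rw [abs_mul, Nat.abs_cast]
    gcongr
  rw [abs_le] at hM hprod ⊢
  constructor <;> linarith

theorem exists_isApproximation {x : ℝ} (hx0 : 0 ≤ x) (hx1 : x ≤ 1) {Q n M : ℕ} (hQ : 0 < Q)
    (hM : |n * x - M| ≤ 1) : ∃ a b q r p R, IsApproximation x Q n M a b q r p R := by
  obtain ⟨a, b, ha0, haQ, hba, hab⟩ := exists_nat_abs_mul_sub_le hx0 hx1 hQ
  set q := n / a
  set R := q / Q + a + 2 with hR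
  have hn : n = a * q + n % a := (Nat.div_add_mod n a).symm
  have hra : n % a < a := Nat.mod_lt n ha0
  have hqQ : (q : ℝ) * (1 / Q) + a + 1 ≤ R := by
    have : (q : ℝ) / Q ≤ (q / Q : ℕ) + 1 := by
      rw [div_le_iff₀ (by positivity)]
      exact_mod_cast (Nat.lt_mul_of_div_lt (Nat.lt_succ_self _) hQ).le
    rw [hR, mul_one_div]
    push_cast at this ⊢
    linarith
  have hshift := (abs_sub_mul_le hx0 hx1 hn hra hM hab).trans hqQ
  rw [abs_le] at hshift
  have hlower : q * b ≤ M + R := by exact_mod_cast (by linarith : (q : ℝ) * b ≤ M + R)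
  have hupper : M ≤ q * b + R := by exact_mod_cast (by linarith : (M : ℝ) ≤ q * b + R)
  have hR3 : 3 ≤ R := Nat.add_le_add_right (ha0.trans_le (Nat.le_add_left a (q / Q))) 2
  refine ⟨a, b, q, n % a, M + R - q * b, R, ha0, haQ, hba, hn, hra, by omega, by omega, hR3, ?_, ?_⟩
  · calc a * Q * R = a * (Q * (q / Q)) + a * Q * (a + 2) := by rw [hR]; ring
      _ ≤ n + a * Q * (a + 2) := by
        gcongr
        exact (Nat.mul_le_mul_left a (Nat.mul_div_le q Q)).trans (Nat.mul_div_le n a)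
  · linarith [mul_le_mul_of_nonneg_left hab q.cast_nonneg, a.cast_nonneg (α := ℝ)]

theorem abs_pow_sub_one_le {ν x : ℝ} (hx : x ≤ 1) (hν : |ν - 1| ≤ x) (i : ℕ) :
    |ν ^ i - 1| ≤ (2 ^ i - 1) * x := by
  induction i with
  | zero => simp
  | succ i ih =>
    have hν2 : |ν| ≤ 2 := by
      rw [abs_le] at hν ⊢
      constructor <;> linarith
    calc |ν ^ (i + 1) - 1| = |ν * (ν ^ i - 1) + (ν - 1)| := by ring_nf
      _ ≤ |ν| * |ν ^ i - 1| + |ν - 1| := by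
        rw [← abs_mul]
        exact abs_add_le _ _
      _ ≤ 2 * ((2 ^ i - 1) * x) + x := by gcongr
      _ = (2 ^ (i + 1) - 1) * x := by ring

theorem abs_pow_sub_one_le_half_pow {ν : ℝ} {i j m : ℕ} (hi : i ≤ j)
    (hν : |ν - 1| ≤ (1 / 2) ^ (j + m)) : |ν ^ i - 1| ≤ (1 / 2) ^ m :=
  calc |ν ^ i - 1| ≤ (2 ^ i - 1) * (1 / 2) ^ (j + m) :=
        abs_pow_sub_one_le (pow_le_one₀ (by norm_num) (by norm_num)) hν i
    _ ≤ 2 ^ j * (1 / 2) ^ (j + m) := by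
        gcongr
        linarith [pow_le_pow_right₀ (one_le_two (α := ℝ)) hi]
    _ = (1 / 2) ^ m := by rw [pow_add, ← mul_assoc, ← mul_pow]; norm_num

theorem log_ten_lt_three : Real.log 10 < 3 := by
  rw [Real.log_lt_iff_lt_exp (by norm_num)]
  calc (10 : ℝ) < 2.7 ^ 3 := by norm_num
    _ ≤ Real.exp 1 ^ 3 := by
      gcongr
      linarith [Real.exp_one_gt_d9]
    _ = Real.exp 3 := by rw [← Real.exp_nat_mul]; norm_num

theorem IsApproximation.mul_abs_log_le {α : ℝ} (hα : 0 < α) {Q n M a b q r p R : ℕ}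
    (hA : IsApproximation (Real.logb 10 α) Q n M a b q r p R) :
    q * |Real.log (α ^ a / 10 ^ b)| ≤ 3 * R := by
  have h10 : 0 < Real.log 10 := Real.log_pos (by norm_num)
  have hlog : Real.log (α ^ a / 10 ^ b) = Real.log 10 * (a * Real.logb 10 α - b) := by
    rw [Real.log_div (by positivity) (by positivity), Real.log_pow, Real.log_pow, Real.logb]
    field_simp
  rw [hlog, abs_mul, abs_of_pos h10, mul_left_comm]
  exact mul_le_mul log_ten_lt_three.le hA.mul_abs_le (by positivity) (by norm_num)

end Approximation

section LinearForm

open Polynomial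

/-- The factor `(3 * α - 2) * (1 - 1 / (9 * 10 ^ u))` of the dominant term of `(3 * α - 2) * N`,
for `N` with decimal digits `9⋯9 8⋯8 9⋯9` and outer blocks of length `u`. -/
noncomputable def leadingFactor (α : ℝ) (u : ℕ) : ℝ :=
  (3 * α - 2) * ((9 * 10 ^ u - 1) / (9 * 10 ^ u))

variable {α : ℝ} {β : ℂ} (H : IsRootPair α β) {Q n M a b q r p R u : ℕ} {ν : ℝ}
include H

namespace IsRootPair

theorem two_le_leadingFactor (hu : 0 < u) : 2 ≤ leadingFactor α u := by
  have h10 : (10 : ℝ) ≤ 10 ^ u := le_self_pow₀ (by norm_num) hu.ne'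
  rw [leadingFactor, ← mul_div_assoc, le_div_iff₀ (by positivity)]
  nlinarith [H.lower]

theorem leadingFactor_le_three (u : ℕ) : leadingFactor α u ≤ 3 := by
  have h10 : (0 : ℝ) < 10 ^ u := by positivity
  rw [leadingFactor, ← mul_div_assoc, div_le_iff₀ (by positivity)]
  nlinarith [H.lower, H.upper]

theorem logb_nonneg : 0 ≤ Real.logb 10 α :=
  Real.logb_nonneg (by norm_num) H.one_lt.le

theorem logb_le_one : Real.logb 10 α ≤ 1 := by
  rw [Real.logb_le_iff_le_rpow (by norm_num) H.pos, Real.rpow_one]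
  linarith [H.upper]

theorem abs_mul_logb_sub_le (hu : 0 < u) (hν : |ν - 1| ≤ 1 / 2)
    (h : 10 ^ M * leadingFactor α u = α ^ n * ν) : |n * Real.logb 10 α - M| ≤ 1 := by
  have hα := pow_pos H.pos n
  have hM : (0 : ℝ) < 10 ^ M := by positivity
  have hlo := H.two_le_leadingFactor hu
  have hhi := H.leadingFactor_le_three u
  rw [abs_le] at hν
  have hpow : 10 ^ (M : ℝ) ≤ α ^ n := by
    rw [Real.rpow_natCast]
    nlinarith
  have hpow' : α ^ n ≤ 10 ^ ((M : ℝ) + 1) := by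
    rw [Real.rpow_add_one (by norm_num), Real.rpow_natCast]
    nlinarith
  rw [← Real.le_logb_iff_rpow_le (by norm_num) hα, Real.logb_pow] at hpow
  rw [← Real.logb_le_iff_le_rpow (by norm_num) hα, Real.logb_pow] at hpow'
  rw [abs_le]
  constructor <;> linarith

theorem pow_ne_intCast (ha : a ≠ 0) {m : ℤ} (hm : m ≠ 0) : α ^ a ≠ m := by
  intro h
  have hβ : aeval β (X ^ a - C m : ℤ[X]) = 0 := H.aeval_beta_eq_zero (by simp [h])
  have hnorm : ‖β‖ ^ a = |(m : ℝ)| := by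
    have : β ^ a = m := by simpa [sub_eq_zero] using hβ
    rw [← norm_pow, this, Complex.norm_intCast]
  have hm1 : (1 : ℝ) ≤ |(m : ℝ)| := mod_cast Int.one_le_abs hm
  exact (hnorm ▸ pow_lt_one₀ (norm_nonneg β) H.norm_beta_lt_one ha).not_ge hm1

theorem hasConjugateBound_pow_div (a b : ℕ) :
    HasConjugateBound α β (10 ^ b) (10 ^ a) (α ^ a / 10 ^ b) := by
  refine ⟨X ^ a, ?_, ?_⟩
  · rw [map_pow, aeval_X]
    push_cast
    field_simp
  · rw [map_pow, aeval_X, norm_pow]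
    calc ‖β‖ ^ a ≤ 1 := pow_le_one₀ (norm_nonneg β) H.norm_beta_lt_one.le
      _ ≤ 10 ^ a := one_le_pow₀ (by norm_num)

theorem hasConjugateBound_leadingFactor_mul (hr : r ≤ a) (hp : p ≤ 2 * R) (hR : 2 ≤ R) :
    HasConjugateBound α β (9 * 10 ^ (u + R)) (10 ^ (3 * (u + R + a)))
      (leadingFactor α u * ((α ^ 2 - α) ^ r * (10 ^ p / 10 ^ R))) := by
  refine ⟨(9 * 10 ^ u - 1) * (3 * X - 2) * (X ^ 2 - X) ^ r * 10 ^ p, ?_, ?_⟩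
  · simp only [map_mul, map_sub, map_pow, map_ofNat, map_one, aeval_X, leadingFactor]
    push_cast
    rw [pow_add]
    field_simp
  simp only [map_mul, map_sub, map_pow, map_ofNat, map_one, aeval_X, norm_mul, norm_pow]
  have hβ := H.norm_beta_lt_one
  have hu : ‖(9 * 10 ^ u - 1 : ℂ)‖ ≤ 9 * 10 ^ u + 1 := by
    refine (norm_sub_le _ _).trans_eq ?_
    norm_num
  have hlin : ‖3 * β - 2‖ ≤ 5 := by
    refine (norm_sub_le _ _).trans ?_
    rw [norm_mul]
    norm_num
    linarith
  have hquad : ‖β ^ 2 - β‖ ≤ 10 := by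
    refine (norm_sub_le _ _).trans ?_
    rw [norm_pow]
    nlinarith [norm_nonneg β]
  calc ‖(9 * 10 ^ u - 1 : ℂ)‖ * ‖3 * β - 2‖ * ‖β ^ 2 - β‖ ^ r * ‖(10 : ℂ)‖ ^ p
      ≤ (9 * 10 ^ u + 1) * 5 * 10 ^ r * 10 ^ p := by
        gcongr
        norm_num
    _ ≤ 10 ^ 2 * 10 ^ u * 10 ^ r * 10 ^ p := by
        gcongr ?_ * _ * _
        linarith [one_le_pow₀ (n := u) (by norm_num : (1 : ℝ) ≤ 10)]
    _ = 10 ^ (2 + u + r + p) := by ring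
    _ ≤ 10 ^ (3 * (u + R + a)) := pow_le_pow_right₀ (by norm_num) (by omega)

end IsRootPair

namespace IsApproximation

theorem leadingFactor_mul_eq (hA : IsApproximation (Real.logb 10 α) Q n M a b q r p R)
    (h : 10 ^ M * leadingFactor α u = α ^ n * ν) :
    leadingFactor α u * ((α ^ 2 - α) ^ r * (10 ^ p / 10 ^ R)) = (α ^ a / 10 ^ b) ^ q * ν := by
  have hr : α ^ r * (α ^ 2 - α) ^ r = 1 := by
    rw [← mul_pow, show α * (α ^ 2 - α) = 1 by linear_combination H.cube, one_pow]
  have hten : (10 : ℝ) ^ M * 10 ^ R = (10 ^ b) ^ q * 10 ^ p := by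
    rw [← pow_add, hA.add_eq, pow_add, ← pow_mul, mul_comm b]
  rw [hA.dividend_eq, pow_add, pow_mul] at h
  rw [div_pow, mul_div_assoc', mul_div_assoc', div_mul_eq_mul_div,
    div_eq_div_iff (by positivity) (by positivity)]
  linear_combination (10 ^ R * (α ^ 2 - α) ^ r) * h + (α ^ a) ^ q * ν * 10 ^ R * hr
    - leadingFactor α u * (α ^ 2 - α) ^ r * hten

omit H in
theorem nine_mul_ten_pow_le (hA : IsApproximation (Real.logb 10 α) Q n M a b q r p R) (u : ℕ) :
    (9 * 10 ^ (u + R) : ℝ) ≤ 10 ^ (3 * (u + R + a)) := by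
  have := hA.three_le
  calc (9 * 10 ^ (u + R) : ℝ) ≤ 10 * 10 ^ (u + R) := by gcongr; norm_num
    _ = 10 ^ (u + R + 1) := by ring
    _ ≤ _ := pow_le_pow_right₀ (by norm_num) (by omega)

omit H in
theorem denominator_le (hA : IsApproximation (Real.logb 10 α) Q n M a b q r p R) (u N S : ℕ) :
    (((10 ^ b) ^ N * (9 * 10 ^ (u + R)) ^ S : ℕ) : ℝ) ≤
      (10 ^ a) ^ N * (10 ^ (3 * (u + R + a))) ^ S := by
  push_cast
  gcongr
  exacts [by norm_num, hA.num_le, hA.nine_mul_ten_pow_le u]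

theorem hasConjugateBound (hA : IsApproximation (Real.logb 10 α) Q n M a b q r p R)
    {e s N S : ℕ} (he : e ≤ N) (hs : s ≤ S) :
    HasConjugateBound α β ((10 ^ b) ^ N * (9 * 10 ^ (u + R)) ^ S)
      ((10 ^ a) ^ N * (10 ^ (3 * (u + R + a))) ^ S) ((α ^ a / 10 ^ b) ^ e *
        (leadingFactor α u * ((α ^ 2 - α) ^ r * (10 ^ p / 10 ^ R))) ^ s) := by
  have hη := (H.hasConjugateBound_pow_div a b).pow_of_le
    (mod_cast Nat.pow_le_pow_right (by norm_num : 0 < 10) hA.num_le) he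
  have hκ := (H.hasConjugateBound_leadingFactor_mul (u := u) hA.remainder_lt.le hA.shift_le
    ((Nat.le_succ 2).trans hA.three_le)).pow_of_le
      (mod_cast hA.nine_mul_ten_pow_le u) hs
  exact hη.mul hκ

end IsApproximation

end LinearForm

section LowerBound

variable {α : ℝ} {β : ℂ} {x ν : ℝ} {Q n M a b q r p R t u : ℕ}

namespace IsApproximation

theorem mul_add_le (hA : IsApproximation x (t ^ 6) n M a b q r p R) (ht : 2 ^ 100 ≤ t)
    (hn : n ≤ 2 * t ^ 20) (hu : u ≤ t) : a * (u + R + a) ≤ 3 * t ^ 14 := by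
  have ht0 : 0 < t ^ 6 := Nat.pow_pos (by omega)
  have haR : a * R ≤ 2 * t ^ 14 + a * (a + 2) := by
    refine Nat.le_of_mul_le_mul_left ?_ ht0
    calc t ^ 6 * (a * R) = a * t ^ 6 * R := by ring
      _ ≤ 2 * t ^ 20 + a * t ^ 6 * (a + 2) := hA.mul_mul_le.trans (Nat.add_le_add_right hn _)
      _ = t ^ 6 * (2 * t ^ 14 + a * (a + 2)) := by ring
  have ha : a * (u + 2 * a + 2) ≤ t ^ 14 :=
    calc a * (u + 2 * a + 2) ≤ t ^ 6 * (t ^ 6 + 2 * t ^ 6 + 2 * t ^ 6) := by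
          have := hA.le
          have := Nat.le_self_pow (by norm_num : 6 ≠ 0) t
          exact Nat.mul_le_mul hA.le (by omega)
      _ = 5 * t ^ 12 := by ring
      _ ≤ t ^ 14 := mul_pow_le_pow (le_trans (by norm_num) ht) (by norm_num)
  linarith

theorem le_quotient (hA : IsApproximation x Q n M a b q r p R) {m : ℕ} (hm : a * m ≤ n) :
    m ≤ q := by
  refine Nat.le_of_lt_succ (lt_of_mul_lt_mul_left (a := a) ?_ a.zero_le)
  calc a * m ≤ a * q + r := hm.trans_eq hA.dividend_eq
    _ < a * (q + 1) := by linarith [hA.remainder_lt]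

theorem quotient_le (hA : IsApproximation x Q n M a b q r p R) : q ≤ n :=
  calc q ≤ a * q := Nat.le_mul_of_pos_left q hA.pos
    _ ≤ n := hA.dividend_eq ▸ Nat.le_add_right _ r

theorem exists_lt_abs_pow_sub_one (H : IsRootPair α β) (ht : 2 ^ 100 ≤ t)
    (hA : IsApproximation (Real.logb 10 α) (t ^ 6) n M a b q r p R) (hn : t ^ 20 ≤ n)
    (hn2 : n ≤ 2 * t ^ 20) (hu : 0 < u) (hut : u ≤ t)
    (hM : 10 ^ M * leadingFactor α u = α ^ n * ν) :
    ∃ i ≤ 201 * t ^ 17, (1 / 2) ^ (8 * (2 * t ^ 17)) < |ν ^ i - 1| := by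
  have hα := H.pos
  have ht16 : 0 < t ^ 16 := Nat.pow_pos (by omega)
  have ht17 : 201 * t ^ 16 ≤ t ^ 17 := mul_pow_le_pow (le_trans (by norm_num) ht) (by norm_num)
  obtain ⟨E, S, hS0, hSt, hES, hE, hYS⟩ := exists_grid ht hA.pos.ne' hA.le
    (Y := u + R + a) (by omega) (hA.mul_add_le ht hn2 hut)
  have hEq : E + 201 * t ≤ q := hA.le_quotient <| by
    have := Nat.pow_le_pow_right (by omega : 0 < t) (by norm_num : 16 ≤ 20)
    omega
  have hη1 : α ^ a / 10 ^ b ≠ 1 := by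
    rw [Ne, div_eq_one_iff_eq (by positivity)]
    exact_mod_cast H.pow_ne_intCast hA.pos.ne' (pow_ne_zero b (by norm_num : (10 : ℤ) ≠ 0))
  have hκ0 : leadingFactor α u * ((α ^ 2 - α) ^ r * (10 ^ p / 10 ^ R)) ≠ 0 := by
    have := H.two_le_leadingFactor hu
    have : 0 < α ^ 2 - α := by nlinarith [H.lower]
    positivity
  have hG : (201 * t : ℕ) * (q * S : ℕ) * |Real.log (α ^ a / 10 ^ b)| ≤
      3 * (201 * t * S * R : ℕ) := by
    have := mul_le_mul_of_nonneg_left (hA.mul_abs_log_le hα) (201 * t * S : ℕ).cast_nonneg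
    push_cast at this ⊢
    linarith
  have hsize := auxiliary_size_le ht (hA.quotient_le.trans hn2) hSt hE hYS
    (by omega : R ≤ u + R + a)
  rw [show (10 : ℝ) ^ (a * (E + 201 * t) + 3 * ((u + R + a) * S)) =
    (10 ^ a) ^ (E + 201 * t) * (10 ^ (3 * (u + R + a))) ^ S by ring] at hsize
  obtain ⟨i, hi, hlt⟩ := H.exists_lt_abs_pow_sub_one (K := t ^ 16) (L := 201 * t) (W := 2 * t ^ 17)
    (Nat.pow_pos (by omega)) (by omega) (by omega)
    (by nlinarith) (by positivity) hη1 hκ0 (hA.leadingFactor_mul_eq H hM) hEq hES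
    (by rw [show t ^ 16 * (201 * t) = 201 * t ^ 17 by ring]; omega) (by omega) hG
    (by positivity) (hA.denominator_le u _ _)
    (fun e he s hs ↦ hA.hasConjugateBound H he.le hs.le) hsize
  refine ⟨i, hi.trans ?_, hlt⟩
  calc S * (201 * t) ≤ t ^ 16 * (201 * t) := Nat.mul_le_mul_right _ hSt
    _ = 201 * t ^ 17 := by ring

end IsApproximation

theorem IsRootPair.half_pow_lt_abs_sub_one (H : IsRootPair α β) (ht : 2 ^ 100 ≤ t)
    (hn : t ^ 20 ≤ n) (hn2 : n ≤ 2 * t ^ 20) (hu : 0 < u) (hut : u ≤ t)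
    (hM : 10 ^ M * leadingFactor α u = α ^ n * ν) : (1 / 2) ^ (217 * t ^ 17) < |ν - 1| := by
  by_contra! hν
  have ht0 : 0 < t ^ 17 := Nat.pow_pos (by omega)
  have hν' : |ν - 1| ≤ 1 / 2 := hν.trans (pow_le_of_le_one (by norm_num) (by norm_num) (by omega))
  obtain ⟨a, b, q, r, p, R, hA⟩ := exists_isApproximation H.logb_nonneg H.logb_le_one
    (Nat.pow_pos (by omega) : 0 < t ^ 6) (H.abs_mul_logb_sub_le hu hν' hM)
  obtain ⟨i, hi, hlt⟩ := hA.exists_lt_abs_pow_sub_one H ht hn hn2 hu hut hM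
  refine hlt.not_ge (abs_pow_sub_one_le_half_pow hi ?_)
  rwa [show 201 * t ^ 17 + 8 * (2 * t ^ 17) = 217 * t ^ 17 by ring]

end LowerBound

section Asymptotics

variable {α : ℝ} {β : ℂ} {n t u v : ℕ}

/-- The difference between `(3 * α - 2) * narayana n` and `α ^ n`, which is the contribution of the
two complex roots. -/
noncomputable def errorTerm (α : ℝ) (n : ℕ) : ℝ :=
  (3 * α - 2) * narayana n - α ^ n

namespace IsRootPair

variable (H : IsRootPair α β)
include H

theorem errorTerm_add_three (n : ℕ) :
    errorTerm α (n + 3) = errorTerm α (n + 2) + errorTerm α n := by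
  simp only [errorTerm, narayana]
  push_cast
  linear_combination (-α ^ n) * H.cube

theorem errorTerm_add_two (n : ℕ) :
    errorTerm α (n + 2) = (1 - α) * errorTerm α (n + 1) - (α ^ 2 - α) * errorTerm α n := by
  induction n with
  | zero =>
    simp [errorTerm, narayana]
    ring
  | succ n ih => linear_combination H.errorTerm_add_three n + α * ih - errorTerm α n * H.cube

/-- The quadratic form with the characteristic polynomial of `β` is multiplied by
`α ^ 2 - α = ‖β‖ ^ 2` at each step. -/
theorem errorTerm_quadratic_mem_Icc (n : ℕ) :
    errorTerm α (n + 1) ^ 2 + (α - 1) * errorTerm α (n + 1) * errorTerm α n +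
      (α ^ 2 - α) * errorTerm α n ^ 2 ∈ Set.Icc 0 2 := by
  have hlo := H.lower
  have hhi := H.upper
  induction n with
  | zero => constructor <;> simp [errorTerm, narayana] <;> nlinarith
  | succ n ih =>
    have hstep : errorTerm α (n + 2) ^ 2 + (α - 1) * errorTerm α (n + 2) * errorTerm α (n + 1) +
        (α ^ 2 - α) * errorTerm α (n + 1) ^ 2 = (α ^ 2 - α) * (errorTerm α (n + 1) ^ 2 +
          (α - 1) * errorTerm α (n + 1) * errorTerm α n + (α ^ 2 - α) * errorTerm α n ^ 2) := by
      rw [H.errorTerm_add_two]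
      ring
    rw [hstep]
    exact ⟨mul_nonneg (by nlinarith) ih.1,
      (mul_le_of_le_one_left ih.1 (by nlinarith)).trans ih.2⟩

theorem abs_errorTerm_le_two (n : ℕ) : |errorTerm α n| ≤ 2 := by
  have hlo := H.lower
  have hform := (H.errorTerm_quadratic_mem_Icc n).2
  have hdisc : 1 / 2 ≤ α ^ 2 - α - (α - 1) ^ 2 / 4 := by nlinarith
  refine abs_le_of_sq_le_sq ?_ (by norm_num)
  nlinarith [sq_nonneg (errorTerm α (n + 1) + (α - 1) / 2 * errorTerm α n),
    sq_nonneg (errorTerm α n)]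

theorem abs_div_sub_one_le (hu : 0 < u)
    (h : 9 * narayana n + 9 + 10 ^ (u + v) = 9 * 10 ^ (2 * u + v) + 10 ^ u) :
    |10 ^ (2 * u + v) * leadingFactor α u / α ^ n - 1| ≤ 10 ^ u / α ^ n := by
  have hα := pow_pos H.pos n
  have hlo := H.lower
  have hhi := H.upper
  have h10 : (10 : ℝ) ≤ 10 ^ u := le_self_pow₀ (by norm_num) hu.ne'
  have hmain : (10 : ℝ) ^ (2 * u + v) * leadingFactor α u =
      (3 * α - 2) * (10 ^ (2 * u + v) - 10 ^ (u + v) / 9) := by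
    rw [leadingFactor, show 2 * u + v = u + (u + v) by ring, pow_add 10 u]
    field_simp
  have hdiff : 10 ^ (2 * u + v) * leadingFactor α u - α ^ n =
      errorTerm α n - (3 * α - 2) * (10 ^ u / 9 - 1) := by
    have h' : (9 * narayana n + 9 + 10 ^ (u + v) : ℝ) = 9 * 10 ^ (2 * u + v) + 10 ^ u :=
      mod_cast h
    rw [errorTerm]
    linear_combination hmain - (3 * α - 2) / 9 * h'
  have herr := abs_le.mp (H.abs_errorTerm_le_two n)
  rw [div_sub_one hα.ne', abs_div, abs_of_pos hα, hdiff]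
  gcongr
  rw [abs_le]
  constructor <;> nlinarith

theorem ten_pow_div_pow_le (ht : 2 ^ 100 ≤ t) (hn : t ^ 20 ≤ n) (hu : u ≤ t) :
    10 ^ u / α ^ n ≤ (1 / 2) ^ (217 * t ^ 17) := by
  have hexponent : 2 * (4 * t + 217 * t ^ 17) ≤ n := by
    have := mul_pow_le_pow (c := 442) (i := 17) (j := 20) (le_trans (by norm_num) ht) (by norm_num)
    have := Nat.le_self_pow (by norm_num : 17 ≠ 0) t
    omega
  rw [div_le_iff₀ (pow_pos H.pos n)]
  calc (10 : ℝ) ^ u ≤ 10 ^ t := pow_le_pow_right₀ (by norm_num) hu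
    _ ≤ 16 ^ t := by gcongr; norm_num
    _ = 2 ^ (4 * t) := by rw [pow_mul]; norm_num
    _ = (1 / 2) ^ (217 * t ^ 17) * 2 ^ (4 * t + 217 * t ^ 17) := by
      rw [pow_add, mul_comm (2 ^ (4 * t)), ← mul_assoc, ← mul_pow]
      norm_num
    _ ≤ (1 / 2) ^ (217 * t ^ 17) * (α ^ 2) ^ (4 * t + 217 * t ^ 17) := by
      gcongr
      nlinarith [H.lower]
    _ ≤ (1 / 2) ^ (217 * t ^ 17) * α ^ n := by
      rw [← pow_mul]
      gcongr
      exact H.one_lt.le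

end IsRootPair

theorem le_of_two_pow_le (ht : 2 ^ 100 ≤ t) (hn : n ≤ 2 * t ^ 20)
    (hu : 2 ^ u ≤ 4 * (n + 4)) : u ≤ t := by
  by_contra! htu
  have hpow : t ^ 21 ≤ 2 ^ t := pow_le_two_pow (by norm_num) (le_trans (by norm_num) ht)
  have hut : 2 ^ (t + 1) ≤ 2 ^ u := Nat.pow_le_pow_right two_pos htu
  have := mul_pow_le_pow (c := 2 ^ 12) (i := 20) (j := 21) (le_trans (by norm_num) ht) (by norm_num)
  have := Nat.le_self_pow (by norm_num : 21 ≠ 0) t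
  rw [pow_succ] at hut
  omega

theorem nine_mul_narayana_add_nine_add_ne_of_two_pow_le (hu : 3000 ≤ u)
    (hun : 2 ^ u ≤ 4 * (n + 4)) :
    9 * narayana n + 9 + 10 ^ (u + v) ≠ 9 * 10 ^ (2 * u + v) + 10 ^ u := by
  intro h
  obtain ⟨α, β, H⟩ := exists_isRootPair
  set t := Nat.nthRoot 20 n
  have htn : t ^ 20 ≤ n := Nat.pow_nthRoot_le_iff.mpr (.inl (by norm_num))
  have hnt : n < (t + 1) ^ 20 := Nat.lt_pow_nthRoot_add_one (by norm_num) n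
  have ht : 2 ^ 100 ≤ t := by
    by_contra! htlt
    have := Nat.pow_le_pow_left htlt 20
    have := Nat.pow_le_pow_right two_pos hu
    norm_num at *
    omega
  have hn2 : n ≤ 2 * t ^ 20 := by
    have := Nat.pow_le_pow_left (by omega : 40 * (t + 1) ≤ 41 * t) 20
    rw [mul_pow, mul_pow] at this
    norm_num at this
    omega
  have hut := le_of_two_pow_le ht hn2 hun
  refine (H.half_pow_lt_abs_sub_one ht htn hn2 (by omega) hut (M := 2 * u + v) ?_).not_ge
    ((H.abs_div_sub_one_le (by omega) h).trans (H.ten_pow_div_pow_le ht htn hut))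
  rw [mul_div_cancel₀ _ (pow_pos H.pos n).ne']

end Asymptotics

section Residues

/-- The element `a + b t + c t ^ 2` of `ℤ[t] / (t ^ 3 - t ^ 2 - 1)`, with coefficients taken modulo
some `M`. Powers of `t` shift the cows sequence, so computing with them yields both its values and
its periods modulo `M`. -/
structure Residue where
  a : ℕ
  b : ℕ
  c : ℕ

namespace Residue

variable {M P n m : ℕ} {s t : Residue}

/-- The product in `ℤ[t] / (t ^ 3 - t ^ 2 - 1)`, with coefficients reduced modulo `M`. -/
def mul (M : ℕ) (s t : Residue) : Residue where
  a := (s.a * t.a + s.b * t.c + s.c * t.b + s.c * t.c) % M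
  b := (s.a * t.b + s.b * t.a + s.c * t.c) % M
  c := (s.a * t.c + s.b * t.b + s.c * t.a + s.b * t.c + s.c * t.b + s.c * t.c) % M

/-- Powers in `ℤ[t] / (t ^ 3 - t ^ 2 - 1)`, with coefficients reduced modulo `M`. -/
def pow (M : ℕ) (s : Residue) : ℕ → Residue
  | 0 => ⟨1, 0, 0⟩
  | k + 1 => (pow M s k).mul M s

/-- The residue `s` agrees with `t ^ n` modulo `M`, expressed by its action on the cows sequence. -/
def Represents (M : ℕ) (s : Residue) (n : ℕ) : Prop :=
  ∀ i, narayana (n + i) ≡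
    s.a * narayana i + s.b * narayana (i + 1) + s.c * narayana (i + 2) [MOD M]

theorem represents_zero : Represents M ⟨1, 0, 0⟩ 0 := fun i ↦ by simp [Nat.ModEq]

theorem represents_one : Represents M ⟨0, 1, 0⟩ 1 := fun i ↦ by simp [Nat.ModEq, add_comm]

theorem Represents.mul (hs : s.Represents M n) (ht : t.Represents M m) :
    (s.mul M t).Represents M (n + m) := by
  intro i
  have h₃ : narayana (i + 3) = narayana (i + 2) + narayana i := rfl
  have h₄ : narayana (i + 4) = narayana (i + 3) + narayana (i + 1) := rfl
  have ht₁ := ht (i + 1)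
  have ht₂ := ht (i + 2)
  rw [← add_assoc] at ht₁ ht₂
  calc narayana (n + m + i)
    _ ≡ s.a * narayana (m + i) + s.b * narayana (m + i + 1) + s.c * narayana (m + i + 2)
        [MOD M] := by rw [add_assoc]; exact hs (m + i)
    _ ≡ s.a * (t.a * narayana i + t.b * narayana (i + 1) + t.c * narayana (i + 2)) +
        s.b * (t.a * narayana (i + 1) + t.b * narayana (i + 2) + t.c * narayana (i + 3)) +
        s.c * (t.a * narayana (i + 2) + t.b * narayana (i + 3) + t.c * narayana (i + 4))
        [MOD M] := (((ht i).mul_left _).add (ht₁.mul_left _)).add (ht₂.mul_left _)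
    _ = (s.a * t.a + s.b * t.c + s.c * t.b + s.c * t.c) * narayana i +
        (s.a * t.b + s.b * t.a + s.c * t.c) * narayana (i + 1) +
        (s.a * t.c + s.b * t.b + s.c * t.a + s.b * t.c + s.c * t.b + s.c * t.c) *
          narayana (i + 2) := by rw [h₄, h₃]; ring
    _ ≡ _ [MOD M] := (((Nat.mod_modEq _ M).symm.mul_right _).add
        ((Nat.mod_modEq _ M).symm.mul_right _)).add ((Nat.mod_modEq _ M).symm.mul_right _)

theorem Represents.pow (hs : s.Represents M n) (k : ℕ) :
    (s.pow M k).Represents M (n * k) := by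
  induction k with
  | zero => exact represents_zero
  | succ k ih => exact ih.mul hs

theorem Represents.narayana_modEq (hs : s.Represents M n) : narayana n ≡ s.b + s.c [MOD M] := by
  simpa [narayana] using hs 0

theorem Represents.narayana_add_mul_modEq (hs : s.Represents M m) (hP : P ∣ M)
    (ha : s.a ≡ 1 [MOD P]) (hb : s.b ≡ 0 [MOD P]) (hc : s.c ≡ 0 [MOD P]) (n k : ℕ) :
    narayana (n + m * k) ≡ narayana n [MOD P] := by
  induction k with
  | zero => rfl
  | succ k ih =>
    refine .trans ?_ ih
    rw [mul_add_one, ← add_assoc, add_comm _ m]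
    refine ((hs _).of_dvd hP).trans ?_
    simpa using ((ha.mul_right _).add (hb.mul_right _)).add (hc.mul_right _)

end Residue

theorem twenty_eight_dvd_add_four (h : 8 ∣ narayana n + 1) : 28 ∣ n + 4 := by
  have hperiod : narayana (n % 28 + 28 * (n / 28)) ≡ narayana (n % 28) [MOD 8] :=
    (Residue.represents_one.pow 28).narayana_add_mul_modEq (M := 8) dvd_rfl
      (by decide +kernel) (by decide +kernel) (by decide +kernel) _ _
  rw [Nat.mod_add_div] at hperiod
  have hmod : ∀ r < 28, 8 ∣ narayana r + 1 → r = 24 := by decide +kernel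
  have := hmod (n % 28) (Nat.mod_lt _ (by norm_num))
    (((hperiod.add_right 1).dvd_iff dvd_rfl).mp h)
  omega

end Residues

section TwoAdic

variable {R : Type*} [Ring R] {x g : R} {m n u v : ℕ}

theorem exists_pow_mul_two_pow_eq (h : x ^ m = 1 + (4 : ℤ) • g) (j : ℕ) :
    ∃ D : R, x ^ (m * 2 ^ j) = 1 + (2 ^ (j + 2) : ℤ) • (g + (2 : ℤ) • D) := by
  induction j with
  | zero => exact ⟨0, by simpa using h⟩
  | succ j ih =>
    obtain ⟨D, hD⟩ := ih
    refine ⟨D + (2 ^ j : ℤ) • ((g + (2 : ℤ) • D) * (g + (2 : ℤ) • D)), ?_⟩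
    rw [pow_succ, ← mul_assoc, pow_mul, hD, pow_two]
    simp only [mul_add, add_mul, one_mul, mul_one, smul_add, smul_mul_assoc, mul_smul_comm,
      smul_smul]
    match_scalars <;> ring

theorem exists_pow_mul_two_pow_mul_eq (h : x ^ m = 1 + (4 : ℤ) • g) (j k : ℕ) :
    ∃ D : R, x ^ (m * 2 ^ j * k) = 1 + (2 ^ (j + 2) : ℤ) • ((k : ℤ) • g + (2 : ℤ) • D) := by
  obtain ⟨D₀, hD₀⟩ := exists_pow_mul_two_pow_eq h j
  induction k with
  | zero => exact ⟨0, by simp⟩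
  | succ k ih =>
    obtain ⟨D, hD⟩ := ih
    refine ⟨D + D₀ + (2 ^ (j + 1) : ℤ) • (((k : ℤ) • g + (2 : ℤ) • D) * (g + (2 : ℤ) • D₀)), ?_⟩
    rw [mul_add, mul_one, pow_add, hD, hD₀]
    simp only [mul_add, add_mul, one_mul, mul_one, smul_add, smul_mul_assoc, mul_smul_comm,
      smul_smul]
    push_cast
    match_scalars <;> ring

/-- The companion matrix of the recurrence `N (n + 3) = N (n + 2) + N n`. -/
def companion : Matrix (Fin 3) (Fin 3) ℤ := !![0, 1, 0; 0, 0, 1; 1, 0, 1]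

theorem companion_pow_fourteen :
    companion ^ 14 = 1 + (4 : ℤ) • !![10, 7, 15; 15, 10, 22; 22, 15, 32] := by
  decide +kernel

-- Extended backwards, the cows sequence takes the values `-1, 0, 1` at `-4, -3, -2`.
theorem companion_pow_add_four_mulVec (n : ℕ) : (companion ^ (n + 4)).mulVec ![-1, 0, 1] =
    ![(narayana n : ℤ), narayana (n + 1), narayana (n + 2)] := by
  induction n with
  | zero => decide +kernel
  | succ n ih =>
    have hrec : narayana (n + 3) = narayana n + narayana (n + 2) := Nat.add_comm _ _
    rw [add_right_comm, pow_succ', ← Matrix.mulVec_mulVec, ih]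
    ext i
    fin_cases i <;>
      simp [companion, Matrix.mulVec, dotProduct, Fin.sum_univ_three, add_assoc, hrec]

theorem exists_narayana_add_one_eq {j k : ℕ} (h : n + 4 = 14 * 2 ^ j * k) :
    ∃ d : ℤ, (narayana n : ℤ) + 1 = 2 ^ (j + 2) * (k * 5 + 2 * d) := by
  obtain ⟨D, hD⟩ := exists_pow_mul_two_pow_mul_eq companion_pow_fourteen j k
  refine ⟨D.mulVec ![-1, 0, 1] 0, ?_⟩
  have h₀ := congrFun (companion_pow_add_four_mulVec n) 0
  have hg : Matrix.mulVec !![10, 7, 15; 15, 10, 22; 22, 15, 32] ![-1, 0, 1] 0 = (5 : ℤ) := by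
    decide +kernel
  rw [h, hD] at h₀
  simp only [Matrix.add_mulVec, Matrix.smul_mulVec, Matrix.one_mulVec, Pi.add_apply,
    Pi.smul_apply, hg, Matrix.cons_val_zero, smul_eq_mul] at h₀
  linarith

theorem two_pow_le_of_dvd_narayana_add_one (h : 2 ^ u ∣ narayana n + 1) :
    2 ^ u ≤ 4 * (n + 4) := by
  rcases lt_or_ge u 3 with hu | hu
  · interval_cases u <;> omega
  obtain ⟨m, hm⟩ := twenty_eight_dvd_add_four ((pow_dvd_pow 2 hu).trans h)
  obtain ⟨j, k, hk, hjk⟩ := Nat.exists_eq_two_pow_mul_odd (n := 2 * m) (by omega)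
  have hnm : n + 4 = 14 * 2 ^ j * k := by rw [mul_assoc, ← hjk]; omega
  obtain ⟨d, hd⟩ := exists_narayana_add_one_eq hnm
  have huj : u ≤ j + 2 := by
    by_contra! hju
    have hdvd : (2 : ℤ) ^ (j + 2) * 2 ∣ narayana n + 1 := by
      rw [← pow_succ]
      exact_mod_cast (pow_dvd_pow 2 hju).trans h
    rw [hd] at hdvd
    have := Int.dvd_of_mul_dvd_mul_left (by positivity) hdvd
    have := hk.natCast (R := ℤ)
    rw [Int.odd_iff] at this
    omega
  calc 2 ^ u ≤ 2 ^ (j + 2) := Nat.pow_le_pow_right two_pos huj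
    _ = 4 * 2 ^ j := by ring
    _ ≤ 4 * (n + 4) := by
      rw [hnm]
      have := Nat.le_mul_of_pos_right (2 ^ j) hk.pos
      linarith

theorem nine_mul_narayana_add_nine_add_ne (hu : 3000 ≤ u) :
    9 * narayana n + 9 + 10 ^ (u + v) ≠ 9 * 10 ^ (2 * u + v) + 10 ^ u := by
  intro h
  refine nine_mul_narayana_add_nine_add_ne_of_two_pow_le hu
    (two_pow_le_of_dvd_narayana_add_one ?_) h
  have hdvd : 2 ^ u ∣ 9 * (narayana n + 1) + 10 ^ (u + v) := by
    rw [mul_add, h, show 2 * u + v = u + (u + v) by ring, pow_add 10 u, mul_left_comm,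
      ← mul_add_one, show (10 : ℕ) = 2 * 5 by norm_num, mul_pow, mul_assoc]
    exact dvd_mul_right _ _
  refine Nat.Coprime.dvd_of_dvd_mul_left (.pow_left u (by norm_num : Nat.Coprime 2 9)) ?_
  exact (Nat.dvd_add_left ((pow_dvd_pow_of_dvd (by norm_num) u).trans
    (pow_dvd_pow 10 (Nat.le_add_right u v)))).mp hdvd

end TwoAdic

section Sieve

variable {M P r x c X z d Z n f₁ f₂ : ℕ}

/-- `X` lies modulo `M` in the geometric progression with first term `x` and ratio `c`. -/
def InOrbit (M x c X : ℕ) : Prop := ∃ i, X ≡ x * c ^ i [MOD M]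

theorem InOrbit.exists_lt (h : InOrbit M x c X) (hr : 0 < r) :
    ∃ i < r, InOrbit M (x * c ^ i % M) (c ^ r % M) X := by
  obtain ⟨i, hi⟩ := h
  refine ⟨i % r, Nat.mod_lt i hr, i / r, hi.trans ?_⟩
  rw [← Nat.mod_add_div i r, pow_add, pow_mul, ← mul_assoc, Nat.mod_add_div]
  exact (Nat.mod_modEq _ M).symm.mul ((Nat.mod_modEq _ M).symm.pow _)

theorem InOrbit.modEq (h : InOrbit M x c X) (hP : P ∣ M) (hc : x * c ≡ x [MOD P]) :
    X ≡ x [MOD P] := by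
  have hpow : ∀ i, x * c ^ i ≡ x [MOD P] := fun i ↦ by
    induction i with
    | zero => simp [Nat.ModEq]
    | succ i ih => exact (pow_succ c i ▸ mul_assoc x _ c ▸ ih.mul_right c).trans hc
  obtain ⟨i, hi⟩ := h
  exact (hi.of_dvd hP).trans (hpow i)

/-- `n` lies in an arithmetic progression whose first term is represented modulo `M` by `T` and
whose common difference is represented by `S`. -/
def InProgression (M : ℕ) (T S : Residue) (n : ℕ) : Prop :=
  ∃ m k i, T.Represents M m ∧ S.Represents M k ∧ n = m + k * i

theorem InProgression.exists_lt {T S : Residue} (h : InProgression M T S n) (hr : 0 < r) :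
    ∃ i < r, InProgression M (T.mul M (S.pow M i)) (S.pow M r) n := by
  obtain ⟨m, k, i, hT, hS, rfl⟩ := h
  refine ⟨i % r, Nat.mod_lt i hr, m + k * (i % r), k * r, i / r, hT.mul (hS.pow _), hS.pow r, ?_⟩
  rw [mul_assoc, add_assoc, ← mul_add, Nat.mod_add_div]

theorem InProgression.narayana_modEq {T S : Residue} (h : InProgression M T S n) (hP : P ∣ M)
    (ha : S.a ≡ 1 [MOD P]) (hb : S.b ≡ 0 [MOD P]) (hc : S.c ≡ 0 [MOD P]) :
    narayana n ≡ T.b + T.c [MOD P] := by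
  obtain ⟨m, k, i, hT, hS, rfl⟩ := h
  exact (hS.narayana_add_mul_modEq hP ha hb hc m i).trans (hT.narayana_modEq.of_dvd hP)

/-- A test for `a ≡ b [MOD P]`, written with `Nat.beq` because the kernel evaluates it natively. -/
def congruent (P a b : ℕ) : Bool := Nat.beq (a % P) (b % P)

theorem congruent_eq_true {a b : ℕ} : congruent P a b = true ↔ a ≡ b [MOD P] :=
  iff_of_eq Nat.beq_eq

/-- A test for `∀ i < k, f i = true`, written with the bare recursor to be fast in the kernel. -/
noncomputable def allBelow (k : ℕ) (f : ℕ → Bool) : Bool :=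
  Nat.rec true (fun i ih ↦ f i && ih) k

theorem allBelow_eq_true {k : ℕ} {f : ℕ → Bool} :
    allBelow k f = true ↔ ∀ i < k, f i = true := by
  induction k with
  | zero => simp [allBelow]
  | succ k ih =>
    rw [Nat.forall_lt_succ_right, ← ih, and_comm, ← Bool.and_eq_true]
    rfl

/-- One refinement step of the sieve: the progressions of `n`, `10 ^ u` and `10 ^ (u + v)` are split
into the given numbers of parts, after which all three quantities are determined modulo
`modulus`. -/
structure Level where
  modulus : ℕ
  nParts : ℕ
  xParts : ℕ
  zParts : ℕ

/-- The sieve for the equation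
`9 * narayana n + f₁ + f₁ * Z + f₂ * X = f₁ * X * Z + f₂ * Z + f₁ * X`, where `n` runs through the
progression given by `T` and `S`, and `X` and `Z` through the orbits given by `(x, c)` and `(z, d)`.
Parts violating the equation modulo the current level are discarded, and `leaf` is tested on the
orbits of `X` that survive all levels. -/
noncomputable def sieve (M f₁ f₂ : ℕ) (leaf : ℕ → ℕ → Bool) :
    List Level → Residue → Residue → ℕ → ℕ → ℕ → ℕ → Bool
  | [], _, _, x, c, _, _ => leaf x c
  | l :: ls, T, S, x, c, z, d =>
    let S' := S.pow M l.nParts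
    let c' := c ^ l.xParts % M
    let d' := d ^ l.zParts % M
    congruent l.modulus S'.a 1 && (congruent l.modulus S'.b 0 && (congruent l.modulus S'.c 0 &&
    (congruent l.modulus (x * c') x && (congruent l.modulus (z * d') z &&
    allBelow l.nParts fun i ↦
      let T := T.mul M (S.pow M i)
      allBelow l.xParts fun j ↦
        let x := x * c ^ j % M
        allBelow l.zParts fun k ↦
          let z := z * d ^ k % M
          !congruent l.modulus (9 * (T.b + T.c) + f₁ + f₁ * z + f₂ * x)
            (f₁ * x * z + f₂ * z + f₁ * x) || sieve M f₁ f₂ leaf ls T S' x c' z d'))))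

theorem InOrbit.exists_lt_modEq (h : InOrbit M x c X) (hr : 0 < r) (hP : P ∣ M)
    (hc : x * (c ^ r % M) ≡ x [MOD P]) :
    ∃ i < r, InOrbit M (x * c ^ i % M) (c ^ r % M) X ∧ X ≡ x * c ^ i % M [MOD P] := by
  obtain ⟨i, hi, hX⟩ := h.exists_lt hr
  refine ⟨i, hi, hX, hX.modEq hP ?_⟩
  have hmod : x * c ^ i % M ≡ x * c ^ i [MOD P] := (Nat.mod_modEq _ M).of_dvd hP
  calc x * c ^ i % M * (c ^ r % M)
    _ ≡ x * c ^ i * (c ^ r % M) [MOD P] := hmod.mul_right _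
    _ = x * (c ^ r % M) * c ^ i := mul_right_comm _ _ _
    _ ≡ x * c ^ i [MOD P] := hc.mul_right _
    _ ≡ x * c ^ i % M [MOD P] := hmod.symm

theorem exists_leaf_of_sieve {leaf : ℕ → ℕ → Bool} {levels : List Level} {T S : Residue}
    (hlevels : ∀ l ∈ levels, l.modulus ∣ M ∧ 0 < l.nParts ∧ 0 < l.xParts ∧ 0 < l.zParts)
    (hn : InProgression M T S n) (hX : InOrbit M x c X) (hZ : InOrbit M z d Z)
    (heq : 9 * narayana n + f₁ + f₁ * Z + f₂ * X = f₁ * X * Z + f₂ * Z + f₁ * X)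
    (h : sieve M f₁ f₂ leaf levels T S x c z d = true) :
    ∃ x c, InOrbit M x c X ∧ leaf x c = true := by
  induction levels generalizing T S x c z d with
  | nil => exact ⟨x, c, hX, h⟩
  | cons l ls ih =>
    obtain ⟨⟨hP, hnParts, hxParts, hzParts⟩, hls⟩ := List.forall_mem_cons.mp hlevels
    simp only [sieve, Bool.and_eq_true, congruent_eq_true, allBelow_eq_true] at h
    obtain ⟨ha, hb, hc, hx, hz, hparts⟩ := h
    obtain ⟨i, hi, hn'⟩ := hn.exists_lt hnParts
    obtain ⟨j, hj, hX', hXmod⟩ := hX.exists_lt_modEq hxParts hP hx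
    obtain ⟨k, hk, hZ', hZmod⟩ := hZ.exists_lt_modEq hzParts hP hz
    have hnmod := hn'.narayana_modEq hP ha hb hc
    refine ih hls hn' hX' hZ' ((Bool.or_eq_true_iff.mp (hparts i hi j hj k hk)).resolve_left ?_)
    rw [Bool.not_eq_true', Bool.not_eq_false, congruent_eq_true]
    have hleft := (((hnmod.mul_left 9).add_right f₁).add (hZmod.mul_left f₁)).add
      (hXmod.mul_left f₂)
    have hright := (((hXmod.mul_left f₁).mul hZmod).add (hZmod.mul_left f₂)).add
      (hXmod.mul_left f₁)
    exact hleft.symm.trans (heq ▸ hright)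

/-- The refinement steps. The moduli were chosen so that at each step the period of the cows
sequence and the order of `10` grow by small factors only. -/
def levels : List Level :=
  [⟨2, 7, 1, 1⟩, ⟨4, 2, 1, 1⟩, ⟨8, 2, 1, 1⟩, ⟨16, 2, 1, 1⟩, ⟨5, 31, 1, 1⟩, ⟨25, 5, 1, 1⟩,
    ⟨125, 5, 1, 1⟩, ⟨625, 5, 1, 1⟩, ⟨11, 3, 2, 2⟩, ⟨13, 1, 3, 3⟩, ⟨27, 3, 1, 1⟩, ⟨31, 1, 5, 5⟩,
    ⟨61, 1, 2, 2⟩, ⟨251, 1, 5, 5⟩, ⟨139501, 1, 3, 3⟩, ⟨6301, 1, 7, 7⟩]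

/-- The refinement steps for the cases in which `u`, and hence `X = 10 ^ u`, is fixed. -/
def levelsFixedX : List Level := levels.map fun l ↦ { l with xParts := 1 }

/-- The least common multiple of the moduli of the levels,
`10 ^ 4 * 11 * 13 * 27 * 31 * 61 * 251 * 139501 * 6301`. -/
def sieveModulus : ℕ := 16108379489382047010000

/-- The only congruence class that the sieve cannot exclude. It stems from the solution with
`n = -4` and `u = -1` of the extended equation: `f₁ = 9`, `f₂ = 8` and `X = 10⁻¹`. -/
def leaf (f₁ f₂ x c : ℕ) : Bool :=
  Nat.beq f₁ 9 && (Nat.beq f₂ 8 && (congruent 6301 (10 * x) 1 && congruent 6301 c 1))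

/-- The sieve for all pairs of distinct digits, with `u + v ≥ 4`. -/
noncomputable def sieveDigits (levels : List Level) (x c : ℕ) : Bool :=
  allBelow 9 fun i ↦ allBelow 10 fun f₂ ↦ Nat.beq (i + 1) f₂ ||
    sieve sieveModulus (i + 1) f₂ (leaf (i + 1) f₂) levels ⟨1, 0, 0⟩ ⟨0, 1, 0⟩ x c (10 ^ 4) 10

theorem sieveDigits_levels : sieveDigits levels (10 ^ 4) 10 = true := by
  decide +kernel

theorem sieveDigits_levelsFixedX : ∀ u < 3, sieveDigits levelsFixedX (10 ^ (u + 1)) 1 = true := by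
  decide +kernel

end Sieve

section Digits

variable {n u v f₁ f₂ : ℕ}

theorem eq_nine_and_eq_eight_of_sieveDigits {ls : List Level} {x c : ℕ}
    (hs : sieveDigits ls x c = true)
    (hls : ∀ l ∈ ls, l.modulus ∣ sieveModulus ∧ 0 < l.nParts ∧ 0 < l.xParts ∧ 0 < l.zParts)
    (hf₁ : 1 ≤ f₁) (hf₁' : f₁ ≤ 9) (hf₂ : f₂ ≤ 9) (hne : f₁ ≠ f₂) (huv : 4 ≤ u + v)
    (hX : InOrbit sieveModulus x c (10 ^ u))
    (heq : 9 * narayana n + f₁ + f₁ * 10 ^ (u + v) + f₂ * 10 ^ u =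
      f₁ * 10 ^ u * 10 ^ (u + v) + f₂ * 10 ^ (u + v) + f₁ * 10 ^ u) :
    f₁ = 9 ∧ f₂ = 8 ∧ 10 * 10 ^ u ≡ 1 [MOD 6301] := by
  simp only [sieveDigits, allBelow_eq_true, Bool.or_eq_true, Nat.beq_eq] at hs
  have hs := hs (f₁ - 1) (by omega) f₂ (by omega)
  rw [Nat.sub_add_cancel hf₁] at hs
  have hn : InProgression sieveModulus ⟨1, 0, 0⟩ ⟨0, 1, 0⟩ n :=
    ⟨0, 1, n, Residue.represents_zero, Residue.represents_one, by omega⟩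
  have hZ : InOrbit sieveModulus (10 ^ 4) 10 (10 ^ (u + v)) :=
    ⟨u + v - 4, by rw [← pow_add, Nat.add_sub_cancel' huv]⟩
  obtain ⟨x', c', hX', hleaf⟩ := exists_leaf_of_sieve hls hn hX hZ heq (hs.resolve_left hne)
  simp only [leaf, Bool.and_eq_true, Nat.beq_eq, congruent_eq_true] at hleaf
  obtain ⟨rfl, rfl, hx, hc⟩ := hleaf
  have hXx : 10 ^ u ≡ x' [MOD 6301] :=
    hX'.modEq (by decide +kernel) (by simpa using hc.mul_left x')
  exact ⟨rfl, rfl, (hXx.mul_left 10).trans hx⟩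

theorem eq_nine_and_eq_eight_of_nine_mul_narayana_add_eq
    (hf₁ : 1 ≤ f₁) (hf₁' : f₁ ≤ 9) (hf₂ : f₂ ≤ 9) (hne : f₁ ≠ f₂) (hu : 1 ≤ u) (huv : 4 ≤ u + v)
    (heq : 9 * narayana n + f₁ + f₁ * 10 ^ (u + v) + f₂ * 10 ^ u =
      f₁ * 10 ^ u * 10 ^ (u + v) + f₂ * 10 ^ (u + v) + f₁ * 10 ^ u) :
    f₁ = 9 ∧ f₂ = 8 ∧ 10 * 10 ^ u ≡ 1 [MOD 6301] := by
  rcases le_or_gt 4 u with hu4 | hu4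
  · exact eq_nine_and_eq_eight_of_sieveDigits sieveDigits_levels (by decide +kernel) hf₁ hf₁' hf₂
      hne huv ⟨u - 4, by rw [← pow_add, Nat.add_sub_cancel' hu4]⟩ heq
  · obtain ⟨w, rfl⟩ := Nat.exists_eq_add_of_le' hu
    exact eq_nine_and_eq_eight_of_sieveDigits (sieveDigits_levelsFixedX w (by omega))
      (by decide +kernel) hf₁ hf₁' hf₂ hne huv ⟨0, by simp [Nat.ModEq]⟩ heq

theorem ten_pow_zmod_eq_one_iff {k : ℕ} :
    (10 : ZMod 6301) ^ k = 1 ↔ 10 ^ k ≡ 1 [MOD 6301] := by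
  rw [← ZMod.natCast_eq_natCast_iff]
  push_cast
  rfl

theorem orderOf_ten_zmod : orderOf (10 : ZMod 6301) = 6300 := by
  refine orderOf_eq_of_pow_and_pow_div_prime (by norm_num)
    (ten_pow_zmod_eq_one_iff.mpr (by decide +kernel)) fun p hp h ↦ ?_
  rw [show 6300 = 2 * 2 * 3 * 3 * 5 * 5 * 7 by norm_num] at h
  simp only [hp.dvd_mul, Nat.prime_dvd_prime_iff_eq hp Nat.prime_two,
    Nat.prime_dvd_prime_iff_eq hp Nat.prime_three, Nat.prime_dvd_prime_iff_eq hp Nat.prime_five,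
    Nat.prime_dvd_prime_iff_eq hp Nat.prime_seven] at h
  rw [Ne, ten_pow_zmod_eq_one_iff]
  obtain (((((rfl | rfl) | rfl) | rfl) | rfl) | rfl) | rfl := h <;> decide +kernel

theorem le_of_ten_mul_ten_pow_modEq (h : 10 * 10 ^ u ≡ 1 [MOD 6301]) : 6299 ≤ u := by
  rw [← pow_succ', ← ten_pow_zmod_eq_one_iff] at h
  have := Nat.le_of_dvd u.succ_pos (orderOf_ten_zmod ▸ orderOf_dvd_of_pow_eq_one h)
  omega

theorem ten_pow_eq_nine_mul_repunit_add_one (u : ℕ) : 10 ^ u = 9 * ((10 ^ u - 1) / 9) + 1 := by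
  have hdvd : 9 ∣ 10 ^ u - 1 := by simpa using Nat.sub_dvd_pow_sub_pow 10 1 u
  rw [Nat.mul_div_cancel' hdvd, Nat.sub_add_cancel (Nat.one_le_pow u 10 (by norm_num))]

theorem nine_mul_narayana_add_eq
    (heq : narayana n = f₁ * ((10 ^ u - 1) / 9) * 10 ^ (u + v) +
      f₂ * ((10 ^ v - 1) / 9) * 10 ^ u + f₁ * ((10 ^ u - 1) / 9)) :
    9 * narayana n + f₁ + f₁ * 10 ^ (u + v) + f₂ * 10 ^ u =
      f₁ * 10 ^ u * 10 ^ (u + v) + f₂ * 10 ^ (u + v) + f₁ * 10 ^ u := by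
  have hu := ten_pow_eq_nine_mul_repunit_add_one u
  have hv := ten_pow_eq_nine_mul_repunit_add_one v
  rw [heq, pow_add]
  generalize (10 ^ u - 1) / 9 = r at *
  generalize (10 ^ v - 1) / 9 = s at *
  rw [hu, hv]
  ring

theorem narayana_monotone : Monotone narayana :=
  monotone_nat_of_le_succ fun
    | 0 | 1 => by decide
    | n + 2 => Nat.le_add_right (narayana (n + 2)) (narayana n)

set_option synthInstance.maxSize 1000 in
theorem narayana_eq_595_of_lt_forty : ∀ n < 40, 99 < narayana n →
    ∀ u < 3, ∀ v < 3, ∀ f₁ < 10, ∀ f₂ < 10, f₁ ≠ f₂ →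
    narayana n = f₁ * ((10 ^ u - 1) / 9) * 10 ^ (u + v) +
      f₂ * ((10 ^ v - 1) / 9) * 10 ^ u + f₁ * ((10 ^ u - 1) / 9) →
    narayana n = 595 := by
  decide +kernel

theorem narayana_eq_595_of_add_lt_four (hf₁ : f₁ ≤ 9) (hf₂ : f₂ ≤ 9) (hne : f₁ ≠ f₂)
    (hu : 1 ≤ u) (hv : 1 ≤ v) (huv : u + v < 4) (hbig : 99 < narayana n)
    (heq : narayana n = f₁ * ((10 ^ u - 1) / 9) * 10 ^ (u + v) +
      f₂ * ((10 ^ v - 1) / 9) * 10 ^ u + f₁ * ((10 ^ u - 1) / 9)) :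
    narayana n = 595 := by
  have hn : n < 40 := by
    by_contra! h40
    have hlt : 10 ^ 6 < narayana n :=
      lt_of_lt_of_le (by decide +kernel) (narayana_monotone h40)
    have hu' : u < 3 := by omega
    have hv' : v < 3 := by omega
    interval_cases u <;> interval_cases v <;> omega
  exact narayana_eq_595_of_lt_forty n hn hbig u (by omega) v (by omega) f₁ (by omega)
    f₂ (by omega) hne heq

end Digits

end NarayanaCows

open NarayanaCows

theorem narayana_palindromic_concat (n u1 u2 f1 f2 : ℕ)
    (hf1 : 1 ≤ f1) (hf1' : f1 ≤ 9) (hf2 : f2 ≤ 9) (hne : f1 ≠ f2)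
    (hu1 : 1 ≤ u1) (hu2 : 1 ≤ u2)
    (hbig : 99 < narayana n)
    (heq : narayana n =
      f1 * ((10 ^ u1 - 1) / 9) * 10 ^ (u1 + u2) +
      f2 * ((10 ^ u2 - 1) / 9) * 10 ^ u1 +
      f1 * ((10 ^ u1 - 1) / 9)) :
    narayana n = 595 := by
  rcases lt_or_ge (u1 + u2) 4 with hsmall | hlarge
  · exact narayana_eq_595_of_add_lt_four hf1' hf2 hne hu1 hu2 hsmall hbig heq
  · have heq' := nine_mul_narayana_add_eq heq
    obtain ⟨rfl, rfl, hX⟩ :=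
      eq_nine_and_eq_eight_of_nine_mul_narayana_add_eq hf1 hf1' hf2 hne hu1 hlarge heq'
    have hu : 3000 ≤ u1 := le_trans (by norm_num) (le_of_ten_mul_ten_pow_modEq hX)
    refine absurd ?_ (nine_mul_narayana_add_nine_add_ne (n := n) (v := u2) hu)
    rw [two_mul, add_assoc u1, pow_add 10 u1 (u1 + u2)]
    linarith
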